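/- Let n ≥ 4 and let L be one of the Cartan type Lie superalgebras W(n), S(n), or (for n even) S̃(n) over ℂ. Then every super-biderivation of L is an inner super-biderivation; that is, for every homogeneous super-biderivation f of L there exists λ ∈ ℂ such that f(x,y) = λ[x,y] for all x, y ∈ L (equivalently BDer(L) = IBDer(L)). -/

import Mathlib

open scoped BigOperators

noncomputable section

namespace CartanSuper

/-- Coordinates of the exterior algebra `Λ(n)` with respect to the monomial basis
`{x_S : S ⊆ {1,…,n}}`. -/
abbrev Lambda (n : ℕ) := Finset (Fin n) → ℂ

/-- Endomorphism algebra of `Λ(n)`. -/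
abbrev E (n : ℕ) := Module.End ℂ (Lambda n)

variable (n : ℕ)

/-- `(−1)^k`. -/
def msign (k : ℕ) : ℂ := (-1 : ℂ) ^ k

/-- The basis monomial `x_S = x_{i₁}⋯x_{i_k}` (indices in increasing order). -/
def mono (S : Finset (Fin n)) : Lambda n := fun T => if T = S then 1 else 0

/-- Number of inversions between `S` and `T`. -/
def inversions (S T : Finset (Fin n)) : ℕ := ((S ×ˢ T).filter fun p => p.2 < p.1).card

/-- The multiplication of `Λ(n)` in coordinates:
`x_S · x_T = (−1)^{inversions} x_{S ∪ T}` for disjoint `S, T` and `0` otherwise. -/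
def lmulFun (f g : Lambda n) : Lambda n :=
  fun U => ∑ S ∈ U.powerset, msign (inversions n S (U \ S)) * f S * g (U \ S)

/-- Left multiplication by an element of `Λ(n)`, as a linear map `Λ(n) →ₗ End Λ(n)`. -/
def mulOp : Lambda n →ₗ[ℂ] E n where
  toFun f :=
    { toFun := lmulFun n f
      map_add' := by
        intro g h; funext U
        simp [lmulFun, mul_add, Finset.sum_add_distrib]
      map_smul' := by
        intro c g; funext U
        simp only [lmulFun, Pi.smul_apply, smul_eq_mul, RingHom.id_apply, Finset.mul_sum]
        exact Finset.sum_congr rfl (by intros; ring) }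
  map_add' := by
    intro f g; apply LinearMap.ext; intro h; funext U
    show lmulFun n (f + g) h U = lmulFun n f h U + lmulFun n g h U
    simp only [lmulFun]
    rw [← Finset.sum_add_distrib]
    exact Finset.sum_congr rfl (by intros; simp [Pi.add_apply]; ring)
  map_smul' := by
    intro c f; apply LinearMap.ext; intro h; funext U
    show lmulFun n (c • f) h U = (c • lmulFun n f h) U
    simp only [lmulFun, Pi.smul_apply, smul_eq_mul, Finset.mul_sum]
    exact Finset.sum_congr rfl (by intros; ring)

/-- The superderivation `∂_i` of `Λ(n)`, in coordinates. -/
def pd (i : Fin n) : E n where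
  toFun f := fun S =>
    if i ∈ S then 0 else msign (S.filter (· < i)).card * f (insert i S)
  map_add' := by
    intro f g; funext S; by_cases h : i ∈ S <;> simp [h, mul_add]
  map_smul' := by
    intro c f; funext S; by_cases h : i ∈ S <;> simp [h] <;> ring

/-- The parity operator `σ` of `Λ(n)`: `σ(x_S) = (−1)^{|S|} x_S`. -/
def par : E n where
  toFun f := fun S => msign S.card * f S
  map_add' := by intro f g; funext S; simp [mul_add]
  map_smul' := by intro c f; funext S; simp; ring

/-- The super-commutator `[D,F] = D∘F − (−1)^{|D||F|} F∘D`, extended bilinearly to all of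
`End Λ(n)` using the parity operator `σ`
(for homogeneous `D`, `σ∘D∘σ = (−1)^{|D|} D`). -/
def sbFun (D F : E n) : E n :=
  D * F - (2:ℂ)⁻¹ • ((F + par n * F * par n) * D + (F - par n * F * par n) * (par n * D * par n))

/-- The super-commutator as a bilinear map. -/
def sbL : E n →ₗ[ℂ] E n →ₗ[ℂ] E n :=
  LinearMap.mk₂ ℂ (sbFun n)
    (fun D D' F => by
      simp only [sbFun, add_mul, sub_mul, mul_add, mul_sub, smul_mul_assoc, mul_smul_comm,
        smul_add, smul_sub]
      module)
    (fun c D F => by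
      simp only [sbFun, add_mul, sub_mul, mul_add, mul_sub, smul_mul_assoc, mul_smul_comm,
        smul_add, smul_sub]
      module)
    (fun D F F' => by
      simp only [sbFun, add_mul, sub_mul, mul_add, mul_sub, smul_mul_assoc, mul_smul_comm,
        smul_add, smul_sub]
      module)
    (fun c D F => by
      simp only [sbFun, add_mul, sub_mul, mul_add, mul_sub, smul_mul_assoc, mul_smul_comm,
        smul_add, smul_sub]
      module)

/-- Shorthand for the super-commutator. -/
def sb (D F : E n) : E n := sbL n D F

/-- The ℤ₂-homogeneous component of `Λ(n)` of parity `p`. -/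
def lpar (p : ZMod 2) : Submodule ℂ (Lambda n) where
  carrier := {f | ∀ S : Finset (Fin n), (S.card : ZMod 2) ≠ p → f S = 0}
  add_mem' := by intro f g hf hg S hS; simp [Pi.add_apply, hf S hS, hg S hS]
  zero_mem' := by intro S hS; rfl
  smul_mem' := by intro c f hf S hS; simp [Pi.smul_apply, hf S hS]

/-- The ℤ-homogeneous component of `Λ(n)` of degree `m` (zero unless `0 ≤ m ≤ n`). -/
def ldeg (m : ℤ) : Submodule ℂ (Lambda n) where
  carrier := {f | ∀ S : Finset (Fin n), (S.card : ℤ) ≠ m → f S = 0}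
  add_mem' := by intro f g hf hg S hS; simp [Pi.add_apply, hf S hS, hg S hS]
  zero_mem' := by intro S hS; rfl
  smul_mem' := by intro c f hf S hS; simp [Pi.smul_apply, hf S hS]

/-- Endomorphisms of `Λ(n)` that are ℤ₂-homogeneous of parity `p`. -/
def epar (p : ZMod 2) : Submodule ℂ (E n) where
  carrier := {D | ∀ (q : ZMod 2), ∀ f ∈ lpar n q, D f ∈ lpar n (q + p)}
  add_mem' := by
    intro D F hD hF q f hf
    simpa [LinearMap.add_apply] using (lpar n (q + p)).add_mem (hD q f hf) (hF q f hf)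
  zero_mem' := by intro q f hf; simpa using (lpar n (q + p)).zero_mem
  smul_mem' := by
    intro c D hD q f hf
    simpa [LinearMap.smul_apply] using (lpar n (q + p)).smul_mem c (hD q f hf)

/-- Endomorphisms of `Λ(n)` that are ℤ-homogeneous of degree `d`. -/
def edeg (d : ℤ) : Submodule ℂ (E n) where
  carrier := {D | ∀ (m : ℤ), ∀ f ∈ ldeg n m, D f ∈ ldeg n (m + d)}
  add_mem' := by
    intro D F hD hF m f hf
    simpa [LinearMap.add_apply] using (ldeg n (m + d)).add_mem (hD m f hf) (hF m f hf)
  zero_mem' := by intro m f hf; simpa using (ldeg n (m + d)).zero_mem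
  smul_mem' := by
    intro c D hD m f hf
    simpa [LinearMap.smul_apply] using (ldeg n (m + d)).smul_mem c (hD m f hf)

/-- The linear map `(f₁,…,f_n) ↦ ∑ᵢ fᵢ ∂ᵢ`. -/
def Wmap : (Fin n → Lambda n) →ₗ[ℂ] E n where
  toFun F := ∑ i, mulOp n (F i) * pd n i
  map_add' := by
    intro F G
    simp only [Pi.add_apply, map_add, add_mul, Finset.sum_add_distrib]
  map_smul' := by
    intro c F
    simp only [RingHom.id_apply, Pi.smul_apply, map_smul, smul_mul_assoc, Finset.smul_sum]

/-- The divergence `(f₁,…,f_n) ↦ ∑ᵢ ∂ᵢ(fᵢ)`. -/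
def divMap : (Fin n → Lambda n) →ₗ[ℂ] Lambda n where
  toFun F := ∑ i, pd n i (F i)
  map_add' := by
    intro F G
    simp only [Pi.add_apply, map_add, Finset.sum_add_distrib]
  map_smul' := by
    intro c F
    simp only [RingHom.id_apply, Pi.smul_apply, map_smul, Finset.smul_sum]

/-- The Witt type Lie superalgebra `W(n) = {∑ fᵢ∂ᵢ : fᵢ ∈ Λ(n)}`. -/
def Wn : Submodule ℂ (E n) := LinearMap.range (Wmap n)

/-- Divergence-free coefficient tuples. -/
def divFree : Submodule ℂ (Fin n → Lambda n) := LinearMap.ker (divMap n)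

/-- The special type Lie superalgebra `S(n) = {∑ fᵢ∂ᵢ : ∑ ∂ᵢ(fᵢ) = 0}`. -/
def Sn : Submodule ℂ (E n) := (divFree n).map (Wmap n)

/-- The top monomial `ω = x₁x₂⋯x_n`. -/
def omegaTop : Lambda n := mono n Finset.univ

/-- `1 − x₁x₂⋯x_n`. -/
def oneM : Lambda n := mono n ∅ - omegaTop n

/-- Multiplication of every coefficient by `1 − x₁⋯x_n`. -/
def oneMScale : (Fin n → Lambda n) →ₗ[ℂ] (Fin n → Lambda n) :=
  LinearMap.pi fun i => (mulOp n (oneM n)) ∘ₗ LinearMap.proj i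

/-- The Lie superalgebra `S̃(n) = {(1−x₁⋯x_n)∑ fᵢ∂ᵢ : ∑ ∂ᵢ(fᵢ) = 0}` (`n` even). -/
def Stn : Submodule ℂ (E n) := (divFree n).map (Wmap n ∘ₗ oneMScale n)

/-- The conjugate index `i'`. -/
def cidx (i : Fin n) : Fin n :=
  ⟨if i.val < n / 2 then i.val + n / 2 else if i.val < 2 * (n / 2) then i.val - n / 2 else i.val,
   by have := i.isLt; split_ifs <;> omega⟩

/-- The linear map `f ↦ D_H(f) = (−1)^{|f|} ∑ᵢ ∂ᵢ(f)∂_{i'}` (the sign is implemented by the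
parity operator `σ`, so that this is a single linear map agreeing with `D_H` on homogeneous
elements). -/
def DHmap : Lambda n →ₗ[ℂ] E n where
  toFun f := ∑ i, mulOp n (pd n i (par n f)) * pd n (cidx n i)
  map_add' := by
    intro f g
    simp only [map_add, add_mul, Finset.sum_add_distrib]
  map_smul' := by
    intro c f
    simp only [RingHom.id_apply, map_smul, smul_mul_assoc, Finset.smul_sum]

/-- Evaluation of the top coefficient. -/
def evalTop : Lambda n →ₗ[ℂ] ℂ := LinearMap.proj Finset.univ

/-- The Hamiltonian Lie superalgebra `H(n) = {D_H(f) : f ∈ ⊕_{i=0}^{n−1} Λ(n)_i}`. -/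
def Hn : Submodule ℂ (E n) := (LinearMap.ker (evalTop n)).map (DHmap n)

/-- `H̃(n) = {D_H(f) : f ∈ Λ(n)}`. -/
def HtN : Submodule ℂ (E n) := LinearMap.range (DHmap n)

/-- The degree derivation `𝒞 = ∑ᵢ xᵢ∂ᵢ`. -/
def CC : E n := ∑ i, mulOp n (mono n {i}) * pd n i

/-- The span of the diagonal elements `xᵢ∂ᵢ`. -/
def diagSpan : Submodule ℂ (E n) :=
  Submodule.span ℂ (Set.range fun i : Fin n => mulOp n (mono n {i}) * pd n i)

/-- The four families of Cartan type Lie superalgebras. -/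
inductive CT | W | S | St | H
deriving DecidableEq

/-- Validity of the parameter `n` for each family. -/
def CT.valid : CT → ℕ → Prop
  | .W, n => 4 ≤ n
  | .S, n => 4 ≤ n
  | .St, n => 4 ≤ n ∧ Even n
  | .H, n => 4 < n

/-- The Cartan type Lie superalgebra `L` itself. -/
def CT.algebra : CT → (n : ℕ) → Submodule ℂ (E n)
  | .W, n => Wn n
  | .S, n => Sn n
  | .St, n => Stn n
  | .H, n => Hn n

/-- The extended algebra `L'`: `L' = L` for `W(n)` and `S̃(n)`, `L' = S(n) ⊕ ℂ𝒞` for `S(n)`,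
and `L' = H̃(n) ⊕ ℂ𝒞` for `H(n)`. -/
def CT.prime : CT → (n : ℕ) → Submodule ℂ (E n)
  | .W, n => Wn n
  | .S, n => Sn n ⊔ Submodule.span ℂ {CC n}
  | .St, n => Stn n
  | .H, n => HtN n ⊔ Submodule.span ℂ {CC n}

/-- The top degree `ξ_L` of the ℤ-grading. -/
def CT.xi : CT → (n : ℕ) → ℤ
  | .W, n => (n : ℤ) - 1
  | .S, n => (n : ℤ) - 2
  | .St, n => (n : ℤ) - 2
  | .H, n => (n : ℤ) - 3

/-- The ℤ-grading component `L_j = L ∩ W(n)_j`; for `S̃(n)` the component of degree `−1`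
is `span{(1−x₁⋯x_n)∂ᵢ}` instead. -/
def CT.grade (t : CT) (n : ℕ) (j : ℤ) : Submodule ℂ (E n) :=
  match t with
  | .St =>
      if j = -1 then
        Submodule.span ℂ (Set.range fun i : Fin n => mulOp n (oneM n) * pd n i)
      else Stn n ⊓ edeg n j
  | t => t.algebra n ⊓ edeg n j

/-- The ℤ-grading component `L'_j` of the extended algebra `L'`. -/
def CT.grade' (t : CT) (n : ℕ) (j : ℤ) : Submodule ℂ (E n) :=
  match t with
  | .St => CT.grade .St n j
  | t => t.prime n ⊓ edeg n j

/-- The standard Cartan subalgebra `H_L` of `L`: the part of the diagonal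
`span{xᵢ∂ᵢ}` lying in `L`. -/
def CT.cartan (t : CT) (n : ℕ) : Submodule ℂ (E n) := t.algebra n ⊓ diagSpan n

/-- The weight space of `M ⊆ End Λ(n)` of weight `μ ∈ H_L^*` under the adjoint action
of the standard Cartan subalgebra of `L`. -/
def wtsp (t : CT) (n : ℕ) (M : Submodule ℂ (E n)) (μ : Module.Dual ℂ (t.cartan n)) :
    Submodule ℂ (E n) where
  carrier := {x | x ∈ M ∧ ∀ h : t.cartan n, sbL n h x = μ h • x}
  add_mem' := by
    rintro x y ⟨hx, hx'⟩ ⟨hy, hy'⟩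
    exact ⟨M.add_mem hx hy, fun h => by simp [map_add, hx' h, hy' h, smul_add]⟩
  zero_mem' := ⟨M.zero_mem, fun h => by simp⟩
  smul_mem' := by
    rintro c x ⟨hx, hx'⟩
    exact ⟨M.smul_mem c hx, fun h => by simp [map_smul, hx' h, smul_comm c]⟩

/-- The set of roots of `M` with respect to the standard Cartan subalgebra of `L`:
the nonzero weights with nonzero weight space. -/
def CT.roots (t : CT) (n : ℕ) (M : Submodule ℂ (E n)) : Set (Module.Dual ℂ (t.cartan n)) :=
  {ε | ε ≠ 0 ∧ wtsp t n M ε ≠ ⊥}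

/-- The sign `(−1)^p` for `p ∈ ℤ₂`. -/
def sgn (p : ZMod 2) : ℂ := (-1 : ℂ) ^ p.val

/-- `f` is a super-biderivation of `L` of ℤ₂-degree `pf`:
a bilinear map with `f(L_α, L_β) ⊆ L_{α+β+pf}` satisfying
`f([x,y],z) = (−1)^{|x||f|}[x,f(y,z)] + (−1)^{|y||z|}[f(x,z),y]` and
`f(x,[y,z]) = [f(x,y),z] + (−1)^{(|f|+|x|)|y|}[y,f(x,z)]` for homogeneous `x,y,z ∈ L`.
(The bilinear map is given as a bilinear map on the ambient space `End Λ(n)`;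
only its restriction to `L` is relevant.) -/
structure IsSuperBider (L : Submodule ℂ (E n)) (pf : ZMod 2)
    (f : E n →ₗ[ℂ] E n →ₗ[ℂ] E n) : Prop where
  maps : ∀ (α β : ZMod 2), ∀ x ∈ L ⊓ epar n α, ∀ y ∈ L ⊓ epar n β,
    f x y ∈ L ⊓ epar n (α + β + pf)
  eq1 : ∀ (α β γ : ZMod 2), ∀ x ∈ L ⊓ epar n α, ∀ y ∈ L ⊓ epar n β, ∀ z ∈ L ⊓ epar n γ,
    f (sbL n x y) z = sgn (α * pf) • sbL n x (f y z) + sgn (β * γ) • sbL n (f x z) y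
  eq2 : ∀ (α β γ : ZMod 2), ∀ x ∈ L ⊓ epar n α, ∀ y ∈ L ⊓ epar n β, ∀ z ∈ L ⊓ epar n γ,
    f x (sbL n y z) = sbL n (f x y) z + sgn ((pf + α) * β) • sbL n y (f x z)

/-- `D` is a superderivation of `L` of ℤ₂-degree `p`:
`D(L_α) ⊆ L_{α+p}` and `D([x,y]) = [D(x),y] + (−1)^{|D||x|}[x,D(y)]` for homogeneous
`x, y ∈ L`. (Given as a linear map on the ambient space `End Λ(n)`.) -/
structure IsSuperDer (L : Submodule ℂ (E n)) (p : ZMod 2)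
    (D : E n →ₗ[ℂ] E n) : Prop where
  maps : ∀ (α : ZMod 2), ∀ x ∈ L ⊓ epar n α, D x ∈ L ⊓ epar n (α + p)
  leib : ∀ (α β : ZMod 2), ∀ x ∈ L ⊓ epar n α, ∀ y ∈ L ⊓ epar n β,
    D (sbL n x y) = sbL n (D x) y + sgn (p * α) • sbL n x (D y)

/-- `f ∈ BDer(L)_ε`: the super-biderivation `f` has weight `ε ∈ H_L^*`, i.e.
`f(L_η, L_ζ) ⊆ L_{ε+η+ζ}` for all weights `η, ζ`. -/
def CT.HasWeight (t : CT) (n : ℕ) (f : E n →ₗ[ℂ] E n →ₗ[ℂ] E n)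
    (ε : Module.Dual ℂ (t.cartan n)) : Prop :=
  ∀ (η ζ : Module.Dual ℂ (t.cartan n)),
    ∀ x ∈ wtsp t n (t.algebra n) η, ∀ y ∈ wtsp t n (t.algebra n) ζ,
      f x y ∈ wtsp t n (t.algebra n) (ε + η + ζ)

/-- `f ∈ BDer(L)_i`: the super-biderivation `f` has ℤ-degree `i`, i.e.
`f(L_j, L_k) ⊆ L_{i+j+k}` for all `j, k ∈ ℤ`. -/
def CT.HasDeg (t : CT) (n : ℕ) (f : E n →ₗ[ℂ] E n →ₗ[ℂ] E n) (i : ℤ) : Prop :=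
  ∀ (j k : ℤ), ∀ x ∈ t.grade n j, ∀ y ∈ t.grade n k, f x y ∈ t.grade n (i + j + k)

section helpers

/-! ### Clifford calculus on `Λ(n)` -/

variable {n}

lemma en_mul (a b : E n) : -a * b = -(a * b) := neg_mul a b
lemma emul_n (a b : E n) : a * -b = -(a * b) := mul_neg a b
lemma esmul_n (c : ℂ) (a : E n) : c • (-a) = -(c • a) := smul_neg c a
lemma en_smul (c : ℂ) (a : E n) : (-c) • a = -(c • a) := neg_smul c a
lemma en_n (a : E n) : - -a = a := neg_neg a
lemma eself_neg {a : E n} (h : a = -a) : a = 0 := by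
  have h2 : (2:ℂ) • a = 0 := by
    rw [two_smul]; nth_rewrite 2 [h]; exact add_neg_cancel a
  exact (smul_eq_zero.mp h2).resolve_left two_ne_zero

abbrev MT (T : Finset (Fin n)) : E n := mulOp n (mono n T)
abbrev XX (i : Fin n) : E n := mulOp n (mono n {i})

def eps (j : Fin n) (R : Finset (Fin n)) : ℂ := msign (R.filter (· < j)).card

lemma msign_add (a b : ℕ) : msign (a + b) = msign a * msign b := pow_add _ _ _

lemma msign_sq (a : ℕ) : msign a * msign a = 1 := by
  unfold msign; rw [← mul_pow]; simp

lemma eps_sq (j : Fin n) (R) : eps j R * eps j R = 1 := msign_sq _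

lemma eps_ne (j : Fin n) (R) : eps j R ≠ 0 := fun h => by simpa [h] using eps_sq j R

lemma eps_insert (i j : Fin n) (S : Finset (Fin n)) (hj : j ∉ S) :
    eps i (insert j S) = (if j < i then -1 else 1) * eps i S := by
  unfold eps
  rw [Finset.filter_insert]
  split_ifs with h
  · rw [Finset.card_insert_of_notMem (by simp [hj])]
    simp [msign, pow_succ]
  · simp

lemma sign_swap (i j : Fin n) (h : i ≠ j) :
    (if j < i then (-1:ℂ) else 1) * (if i < j then -1 else 1) = -1 := by
  rcases lt_or_gt_of_ne h with h | h
  · simp [h, not_lt.mpr h.le]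
  · simp [h, not_lt.mpr h.le]

lemma inv_single (j : Fin n) (R : Finset (Fin n)) : msign (inversions n {j} R) = eps j R := by
  unfold eps inversions
  congr 1
  rw [Finset.singleton_product, Finset.filter_map, Finset.card_map]
  congr 1

lemma inv_union_left (S S' T : Finset (Fin n)) (h : Disjoint S S') :
    inversions n (S ∪ S') T = inversions n S T + inversions n S' T := by
  unfold inversions
  rw [Finset.union_product, Finset.filter_union, Finset.card_union_of_disjoint]
  apply Finset.disjoint_filter_filter
  exact Finset.disjoint_product.mpr (Or.inl h)

lemma inv_union_right (S T T' : Finset (Fin n)) (h : Disjoint T T') :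
    inversions n S (T ∪ T') = inversions n S T + inversions n S T' := by
  unfold inversions
  rw [Finset.product_union, Finset.filter_union, Finset.card_union_of_disjoint]
  apply Finset.disjoint_filter_filter
  exact Finset.disjoint_product.mpr (Or.inr h)

lemma MT_apply (T : Finset (Fin n)) (g : Lambda n) (U : Finset (Fin n)) :
    (MT T g) U = if T ⊆ U then msign (inversions n T (U \ T)) * g (U \ T) else 0 := by
  show lmulFun n (mono n T) g U = _
  unfold lmulFun mono
  split_ifs with h
  · rw [Finset.sum_eq_single T]
    · simp
    · intro S _ hS; simp [hS]
    · intro h'; exact absurd (Finset.mem_powerset.mpr h) h'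
  · apply Finset.sum_eq_zero
    intro S hS
    have : S ≠ T := by rintro rfl; exact h (Finset.mem_powerset.mp hS)
    simp [this]

lemma XX_apply (j : Fin n) (g : Lambda n) (U : Finset (Fin n)) :
    (XX j g) U = if j ∈ U then eps j (U.erase j) * g (U.erase j) else 0 := by
  have := MT_apply {j} g U
  rw [inv_single] at this
  simpa [Finset.sdiff_singleton_eq_erase] using this

lemma pd_apply (i : Fin n) (f : Lambda n) (S : Finset (Fin n)) :
    (pd n i f) S = if i ∈ S then 0 else eps i S * f (insert i S) := rfl

lemma MT_empty : (MT ∅ : E n) = 1 := by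
  apply LinearMap.ext; intro g; funext U
  rw [MT_apply]; simp [inversions, msign]

lemma XX_MT (j : Fin n) (R : Finset (Fin n)) (h : j ∉ R) :
    XX j * MT R = eps j R • MT (insert j R) := by
  apply LinearMap.ext; intro g; funext U
  show (XX j (MT R g)) U = eps j R * (MT (insert j R) g) U
  rw [XX_apply, MT_apply, MT_apply]
  by_cases hj : j ∈ U
  · by_cases hR : R ⊆ U
    · have h1 : R ⊆ U.erase j := fun x hx => Finset.mem_erase.mpr
        ⟨fun e => h (e ▸ hx), hR hx⟩
      have h2 : insert j R ⊆ U := Finset.insert_subset hj hR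
      have h3 : U.erase j \ R = U \ insert j R := by ext; simp; tauto
      have h4 : U.erase j = R ∪ (U \ insert j R) := by
        rw [← h3, Finset.union_sdiff_of_subset h1]
      rw [if_pos hj, if_pos h1, if_pos h2, h3, ← inv_single j (U.erase j), h4, inv_union_right,
        Finset.insert_eq, inv_union_left, msign_add, msign_add, ← inv_single j R]
      · ring
      · simpa using h
      · rw [Finset.disjoint_left]; intro a ha; simp [ha]
    · have h1 : ¬ R ⊆ U.erase j := fun h' => hR (h'.trans (Finset.erase_subset _ _))
      have h2 : ¬ insert j R ⊆ U := fun h' => hR ((Finset.subset_insert _ _).trans h')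
      simp [h1, h2]
  · have h2 : ¬ insert j R ⊆ U := fun h' => hj (h' (Finset.mem_insert_self _ _))
    simp [hj, h2]

lemma MT_insert (j : Fin n) (R : Finset (Fin n)) (h : j ∉ R) :
    MT (insert j R) = eps j R • (XX j * MT R) := by
  rw [XX_MT j R h, smul_smul, eps_sq, one_smul]

lemma XX_sq (j : Fin n) : XX j * XX j = 0 := by
  apply LinearMap.ext; intro g; funext U
  show (XX j (XX j g)) U = 0
  rw [XX_apply, XX_apply]; simp

lemma XX_anti (i j : Fin n) : XX i * XX j = - (XX j * XX i) := by
  by_cases h : i = j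
  · subst h; simp [XX_sq]
  · have h1 := XX_MT i {j} (by simpa using h)
    have h2 := XX_MT j {i} (by simpa using Ne.symm h)
    have e1 : eps i {j} = if j < i then -1 else 1 := by
      have := eps_insert i j ∅ (by simp); simpa [eps, msign] using this
    have e2 : eps j {i} = if i < j then -1 else 1 := by
      have := eps_insert j i ∅ (by simp); simpa [eps, msign] using this
    rw [h1, h2, e1, e2, Finset.pair_comm i j, ← en_smul]
    congr 1
    rcases lt_or_gt_of_ne h with h | h
    · simp [h, not_lt.mpr h.le]
    · simp [h, not_lt.mpr h.le]

lemma pd_anti (i j : Fin n) : pd n i * pd n j = - (pd n j * pd n i) := by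
  apply LinearMap.ext; intro g; funext S
  show (pd n i (pd n j g)) S = - (pd n j (pd n i g)) S
  simp only [pd_apply]
  by_cases hij : i = j
  · subst hij; by_cases h : i ∈ S <;> simp [h]
  by_cases hi : i ∈ S
  · simp [hi]
  by_cases hj : j ∈ S
  · simp [hj]
  have hij' : ¬ j = i := fun h => hij h.symm
  simp only [hi, hj, if_false, Finset.mem_insert, or_false, hij, hij']
  rw [eps_insert j i S hi, eps_insert i j S hj, Finset.insert_comm]
  rcases lt_or_gt_of_ne hij with h | h
  · simp [h, not_lt.mpr h.le]; ring
  · simp [h, not_lt.mpr h.le]; ring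

lemma pd_XX_self (i : Fin n) : pd n i * XX i = 1 - XX i * pd n i := by
  apply LinearMap.ext; intro g; funext S
  show (pd n i (XX i g)) S = g S - (XX i (pd n i g)) S
  rw [pd_apply, XX_apply, XX_apply, pd_apply]
  by_cases hi : i ∈ S
  · simp [hi, ← mul_assoc, eps_sq]
  · simp [hi, ← mul_assoc, eps_sq]

lemma pd_XX (i j : Fin n) (hij : i ≠ j) : pd n i * XX j = - (XX j * pd n i) := by
  apply LinearMap.ext; intro g; funext S
  show (pd n i (XX j g)) S = - (XX j (pd n i g)) S
  rw [pd_apply, XX_apply, XX_apply, pd_apply]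
  by_cases hj : j ∈ S
  · obtain ⟨R, hR, rfl⟩ : ∃ R, j ∉ R ∧ S = insert j R :=
      ⟨S.erase j, by simp, (Finset.insert_erase hj).symm⟩
    by_cases hi : i ∈ R
    · simp [hi, hR]
    · have h1 : (insert i (insert j R)).erase j = insert i R := by
        rw [Finset.insert_comm, Finset.erase_insert]; simp [hR, Ne.symm hij]
      simp only [Finset.mem_insert, hij, hi, or_self, if_false, true_or, or_true, if_true, h1,
        Finset.erase_insert hR]
      rw [eps_insert i j R hR, eps_insert j i R hi]
      have := sign_swap i j hij
      linear_combination (eps i R * eps j R * g (insert i R)) * this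
  · simp [hj, Ne.symm hij]

lemma pd_sq (i : Fin n) : pd n i * pd n i = 0 := by
  exact eself_neg (pd_anti i i)

lemma pd_MT (i : Fin n) (T : Finset (Fin n)) (h : i ∉ T) :
    pd n i * MT T = msign T.card • (MT T * pd n i) := by
  induction T using Finset.induction_on with
  | empty => simp [MT_empty, msign]
  | insert j R hj ih =>
    have hi : i ∉ R := fun h' => h (Finset.mem_insert_of_mem h')
    have hij : i ≠ j := fun h' => h (h' ▸ Finset.mem_insert_self _ _)
    rw [MT_insert j R hj, Finset.card_insert_of_notMem hj, mul_smul_comm, smul_mul_assoc,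
      ← mul_assoc, pd_XX i j hij, en_mul, mul_assoc, ih hi, mul_smul_comm, ← esmul_n, smul_comm]
    simp only [msign, pow_succ, mul_neg, mul_one, en_smul, esmul_n, mul_assoc]

lemma MT_XX (i : Fin n) (T : Finset (Fin n)) :
    MT T * XX i = msign T.card • (XX i * MT T) := by
  induction T using Finset.induction_on with
  | empty => simp [MT_empty, msign]
  | insert j R hj ih =>
    rw [MT_insert j R hj, Finset.card_insert_of_notMem hj, mul_smul_comm, smul_mul_assoc,
      mul_assoc, ih, mul_smul_comm, ← mul_assoc, XX_anti j i, smul_comm]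
    simp only [msign, pow_succ, mul_neg, mul_one, en_smul, esmul_n, en_mul, mul_assoc]

lemma XX_MT_mem (i : Fin n) (T : Finset (Fin n)) (h : i ∈ T) : XX i * MT T = 0 := by
  rw [← Finset.insert_erase h, MT_insert _ _ (by simp), mul_smul_comm, ← mul_assoc, XX_sq]; simp

/-- The product of `x_S` and `x_T` vanishes when `S` and `T` meet. -/
lemma MT_MT_meet (S T : Finset (Fin n)) (i : Fin n) (h : i ∈ S) (h' : i ∈ T) :
    MT S * MT T = 0 := by
  rw [← Finset.insert_erase h, MT_insert _ _ (by simp), smul_mul_assoc, mul_assoc]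
  have : XX i * MT (S.erase i) = msign (S.erase i).card • (MT (S.erase i) * XX i) := by
    rw [MT_XX, smul_smul, msign_sq, one_smul]
  rw [← mul_assoc, this, smul_mul_assoc, mul_assoc, XX_MT_mem i T h']; simp

/-! ### Parities -/

lemma epar_mul {p q : ZMod 2} {D F : E n} (hD : D ∈ epar n p) (hF : F ∈ epar n q) :
    D * F ∈ epar n (p + q) := by
  intro r f hf
  have := hD _ _ (hF r f hf)
  rwa [show r + (p + q) = r + q + p by ring]

lemma one_epar : (1 : E n) ∈ epar n 0 := by
  intro r f hf; simpa using hf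

lemma pd_epar (i : Fin n) : pd n i ∈ epar n 1 := by
  intro r f hf S hS
  rw [pd_apply]
  split_ifs with h
  · rfl
  · rw [hf, mul_zero]
    rw [Finset.card_insert_of_notMem h]
    intro h'; apply hS; push_cast at h'; rw [← h', add_assoc]; 
    have : (1:ZMod 2) + 1 = 0 := by decide
    simp [this]

lemma XX_epar (i : Fin n) : XX i ∈ epar n 1 := by
  intro r f hf S hS
  rw [XX_apply]
  split_ifs with h
  · rw [hf, mul_zero]
    intro h'; apply hS
    rw [← Finset.insert_erase h, Finset.card_insert_of_notMem (by simp)]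
    push_cast; rw [h']
  · rfl

lemma MT_epar (T : Finset (Fin n)) : MT T ∈ epar n (T.card : ZMod 2) := by
  induction T using Finset.induction_on with
  | empty => rw [MT_empty]; exact one_epar
  | insert j R hj ih =>
    rw [MT_insert j R hj, Finset.card_insert_of_notMem hj]
    have := (epar n _).smul_mem (eps j R) (epar_mul (XX_epar j) ih)
    push_cast; rwa [add_comm]

lemma sgn_cast (k : ℕ) : sgn (k : ZMod 2) = msign k := by
  unfold sgn msign
  rw [ZMod.val_natCast, ← neg_one_pow_eq_pow_mod_two]

lemma sgn_add (p q : ZMod 2) : sgn (p + q) = sgn p * sgn q := by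
  have h : ∀ p q : ZMod 2, (p + q).val = (p.val + q.val) % 2 := by decide
  unfold sgn
  rw [h, ← neg_one_pow_eq_pow_mod_two, pow_add]

lemma sgn_sq (p : ZMod 2) : sgn p * sgn p = 1 := by
  unfold sgn; rw [← mul_pow]; simp

lemma sgn_zero : sgn 0 = 1 := by simp [sgn]
lemma sgn_one : sgn 1 = -1 := by
  have : (1 : ZMod 2).val = 1 := by decide
  simp [sgn, this]

lemma par_apply_lpar (p : ZMod 2) (f : Lambda n) (hf : f ∈ lpar n p) : par n f = sgn p • f := by
  funext S
  show msign S.card * f S = sgn p * f S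
  by_cases h : (S.card : ZMod 2) = p
  · rw [← h, sgn_cast]
  · rw [hf S h]; simp

lemma mono_lpar (S : Finset (Fin n)) : mono n S ∈ lpar n (S.card : ZMod 2) := by
  intro T hT
  have : T ≠ S := by rintro rfl; exact hT rfl
  simp [mono, this]

lemma lam_ext {D F : E n} (h : ∀ S, D (mono n S) = F (mono n S)) : D = F := by
  apply LinearMap.pi_ext'
  intro S
  apply LinearMap.ext_ring
  have e : (LinearMap.single ℂ (fun _ : Finset (Fin n) => ℂ) S) 1 = mono n S := by
    funext T; simp [mono, Pi.single_apply]
  show D _ = F _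
  rw [e]; exact h S

lemma par_conj {p : ZMod 2} {D : E n} (hD : D ∈ epar n p) : par n * D * par n = sgn p • D := by
  apply lam_ext; intro S
  show par n (D (par n (mono n S))) = sgn p • D (mono n S)
  rw [par_apply_lpar _ _ (mono_lpar S), map_smul, map_smul,
    par_apply_lpar _ _ (hD _ _ (mono_lpar S)), smul_smul, sgn_add, ← mul_assoc, sgn_sq, one_mul]

lemma epar_disj {D : E n} {p : ZMod 2} (h : D ∈ epar n p) (h' : D ∈ epar n (p + 1)) : D = 0 := by
  have h1 := par_conj h
  rw [par_conj h', sgn_add, sgn_one] at h1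
  have h2 : sgn p • D + sgn p • D = 0 := by
    nth_rewrite 1 [← h1]; module
  rw [← two_smul ℂ, smul_smul] at h2
  have : (2:ℂ) * sgn p ≠ 0 := by
    intro h; have := sgn_sq p; rcases mul_eq_zero.mp h with h | h
    · norm_num at h
    · simp [h] at this
  exact (smul_eq_zero.mp h2).resolve_left this

lemma sbL_apply (D F : E n) : sbL n D F = sbFun n D F := rfl

lemma sb_hom {p q : ZMod 2} {D F : E n} (hD : D ∈ epar n p) (hF : F ∈ epar n q) :
    sbL n D F = D * F - sgn (p * q) • (F * D) := by
  rw [sbL_apply]; unfold sbFun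
  rw [par_conj hD, par_conj hF]
  have hz : ∀ p : ZMod 2, p = 0 ∨ p = 1 := by decide
  have hp := hz p
  have hq := hz q
  rcases hp with rfl | rfl <;> rcases hq with rfl | rfl <;>
    simp only [mul_zero, zero_mul, mul_one, sgn_zero, sgn_one, en_smul, one_smul, add_mul, sub_mul,
      en_mul, emul_n] <;> module

lemma sb_even_left {D : E n} (hD : D ∈ epar n 0) (F : E n) : sbL n D F = D * F - F * D := by
  rw [sbL_apply]; unfold sbFun
  rw [par_conj hD, sgn_zero, one_smul, ← add_mul]
  have : (F + par n * F * par n + (F - par n * F * par n)) = (2:ℂ) • F := by module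
  rw [this, smul_mul_assoc, smul_smul]; norm_num

lemma sb_even_right {D : E n} (hD : D ∈ epar n 0) (F : E n) : sbL n F D = F * D - D * F := by
  rw [sbL_apply]; unfold sbFun
  rw [par_conj hD, sgn_zero, one_smul]
  have : (D + D) * F + (D - D) * (par n * F * par n) = (2:ℂ) • (D * F) := by
    rw [sub_self, zero_mul, ← two_smul ℂ D, smul_mul_assoc, add_zero]
  rw [this, smul_smul]; norm_num

/-! ### Super Jacobi identities -/

lemma jac_ring' {R : Type*} [Ring R] [Algebra ℂ R] (x y z : R) (a b c : ℂ) (hc : c * c = 1) :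
    (x * y - a • (y * x)) * z - (b * c) • (z * (x * y - a • (y * x))) =
    (x * (y * z - c • (z * y)) - (a * b) • ((y * z - c • (z * y)) * x)) +
      c • ((x * z - b • (z * x)) * y - (a * c) • (y * (x * z - b • (z * x)))) := by
  simp only [mul_sub, sub_mul, mul_smul_comm, smul_mul_assoc, mul_assoc, smul_sub, smul_smul]
  have : c * (a * c) = a := by rw [mul_comm a c, ← mul_assoc, hc, one_mul]
  have h2 : c * (a * (c * b)) = a * b := by linear_combination (a*b)*hc
  rw [this, h2]
  module

lemma sb_epar {p q : ZMod 2} {D F : E n} (hD : D ∈ epar n p) (hF : F ∈ epar n q) :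
    sbL n D F ∈ epar n (p + q) := by
  rw [sb_hom hD hF]
  refine (epar n _).sub_mem (epar_mul hD hF) ((epar n _).smul_mem _ ?_)
  rw [add_comm]; exact epar_mul hF hD

lemma jacobi {p q r : ZMod 2} {x y z : E n} (hx : x ∈ epar n p) (hy : y ∈ epar n q)
    (hz : z ∈ epar n r) :
    sbL n x (sbL n y z) = sbL n (sbL n x y) z + sgn (p * q) • sbL n y (sbL n x z) := by
  rw [sb_hom hx (sb_epar hy hz), sb_hom (sb_epar hx hy) hz, sb_hom hy (sb_epar hx hz),
    sb_hom hx hy, sb_hom hx hz, sb_hom hy hz, mul_add, add_mul, mul_add, sgn_add, sgn_add, sgn_add,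
    mul_comm q p]
  generalize hs : sgn (p * q) = a
  have ha : a * a = 1 := by rw [← hs]; exact sgn_sq _
  generalize sgn (p * r) = b
  generalize sgn (q * r) = c
  have key : ∀ {R : Type} [Ring R] [Algebra ℂ R] (x y z : R),
    x * (y * z - c • (z * y)) - (a * b) • ((y * z - c • (z * y)) * x) =
    ((x * y - a • (y * x)) * z - (b * c) • (z * (x * y - a • (y * x)))) +
      a • (y * (x * z - b • (z * x)) - (a * c) • ((x * z - b • (z * x)) * y)) := by
    intro R _ _ x y z
    simp only [mul_sub, sub_mul, mul_smul_comm, smul_mul_assoc, mul_assoc, smul_sub, smul_smul]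
    have : a * (a * c) = c := by rw [← mul_assoc, ha, one_mul]
    have h2 : a * (a * (c * b)) = c * b := by rw [← mul_assoc, ha, one_mul]
    rw [this, h2]
    module
  exact key x y z

lemma jacobi' {p q r : ZMod 2} {x y z : E n} (hx : x ∈ epar n p) (hy : y ∈ epar n q)
    (hz : z ∈ epar n r) :
    sbL n (sbL n x y) z = sbL n x (sbL n y z) + sgn (q * r) • sbL n (sbL n x z) y := by
  rw [sb_hom hx (sb_epar hy hz), sb_hom (sb_epar hx hy) hz, sb_hom (sb_epar hx hz) hy,
    sb_hom hx hy, sb_hom hx hz, sb_hom hy hz, mul_add, add_mul, add_mul, sgn_add, sgn_add, sgn_add,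
    mul_comm r q]
  exact jac_ring' x y z _ _ _ (sgn_sq _)

lemma sb_skew {p q : ZMod 2} {x y : E n} (hx : x ∈ epar n p) (hy : y ∈ epar n q) :
    sgn (p * q) • sbL n x y = - sbL n y x := by
  rw [sb_hom hx hy, sb_hom hy hx, mul_comm q p, smul_sub, smul_smul, sgn_sq]
  module

lemma sb_skew_even {x : E n} (hx : x ∈ epar n 0) (y : E n) : sbL n x y = - sbL n y x := by
  rw [sb_even_left hx, sb_even_right hx]; module

/-- Even elements act by derivations. -/
lemma jac_even {p q : ZMod 2} {h F x : E n} (hh : h ∈ epar n 0) (hF : F ∈ epar n p)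
    (hx : x ∈ epar n q) :
    sbL n h (sbL n F x) = sbL n (sbL n h F) x + sbL n F (sbL n h x) := by
  have := jacobi hh hF hx
  rwa [zero_mul, sgn_zero, one_smul] at this

/-! ### The torus -/

def hh (a : Fin n → ℂ) : E n := ∑ i, a i • (XX i * pd n i)

lemma XXpd_apply (i : Fin n) (g : Lambda n) (S : Finset (Fin n)) :
    ((XX i * pd n i) g) S = if i ∈ S then g S else 0 := by
  show (XX i (pd n i g)) S = _
  rw [XX_apply]
  split_ifs with h
  · rw [pd_apply]; simp [← mul_assoc, eps_sq, h]
  · rfl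

lemma hh_apply (a : Fin n → ℂ) (g : Lambda n) (S : Finset (Fin n)) :
    (hh a g) S = (∑ s ∈ S, a s) * g S := by
  unfold hh
  rw [LinearMap.sum_apply, Finset.sum_apply]
  have : ∀ i, ((a i • (XX i * pd n i)) g) S = if i ∈ S then a i * g S else 0 := by
    intro i
    show a i * ((XX i * pd n i) g) S = _
    rw [XXpd_apply]; split_ifs <;> simp
  simp_rw [this]
  rw [Finset.sum_mul, Finset.sum_ite_mem, Finset.univ_inter]

lemma hh_epar (a : Fin n → ℂ) : hh a ∈ epar n 0 := by
  unfold hh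
  refine Submodule.sum_mem _ fun i _ => Submodule.smul_mem _ _ ?_
  have := epar_mul (XX_epar i) (pd_epar i)
  rwa [show (1 + 1 : ZMod 2) = 0 by decide] at this

lemma hh_comm (a b : Fin n → ℂ) : hh a * hh b = hh b * hh a := by
  apply LinearMap.ext; intro g; funext S
  show (hh a (hh b g)) S = (hh b (hh a g)) S
  simp only [hh_apply]; ring

lemma hh_sb (a b : Fin n → ℂ) : sbL n (hh a) (hh b) = 0 := by
  rw [sb_even_left (hh_epar a), hh_comm]; exact sub_self _

lemma hh_ad_comm (a b : Fin n → ℂ) (F : E n) :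
    sbL n (hh a) (sbL n (hh b) F) = sbL n (hh b) (sbL n (hh a) F) := by
  rw [sb_even_left (hh_epar a), sb_even_left (hh_epar b), sb_even_left (hh_epar b),
    sb_even_left (hh_epar a)]
  have key : ∀ {R : Type} [Ring R] (x y z : R), x * y = y * x →
    x * (y * z - z * y) - (y * z - z * y) * x = y * (x * z - z * x) - (x * z - z * x) * y := by
    intro R _ x y z hxy
    simp only [mul_sub, sub_mul, mul_assoc]
    rw [← mul_assoc x y z, hxy, mul_assoc]
    abel
  exact key _ _ _ (hh_comm a b)

/-! ### Abstract part of the argument -/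

structure WtV (L : Submodule ℂ (E n)) (A : Set (Fin n → ℂ)) (x : E n) (p : ZMod 2)
    (η : (Fin n → ℂ) → ℂ) : Prop where
  mem : x ∈ L ⊓ epar n p
  wt : ∀ a ∈ A, sbL n (hh a) x = η a • x

structure Good (L : Submodule ℂ (E n)) (A : Set (Fin n → ℂ)) (x : E n) (p : ZMod 2)
    (η : (Fin n → ℂ) → ℂ) : Prop extends WtV L A x p η where
  nz : ∃ a ∈ A, η a ≠ 0
  ne : x ≠ 0
  one : ∀ u ∈ L, (∀ a ∈ A, sbL n (hh a) u = η a • u) → ∃ c : ℂ, u = c • x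

lemma abs_identity {V : Type*} [AddCommGroup V] [Module ℂ V] (α β γ B : V →ₗ[ℂ] V)
    (hαβ : ∀ v, α (β v) = β (α v)) (hγβ : ∀ v, γ (β v) = β (γ v)) (ηa ηb ηc : ℂ)
    (A1 A2 F1 F2 : V)
    (hαB : α (B F2) = B (α F2) + ηa • B F2) (hγB : γ (B F1) = B (γ F1) + ηc • B F1)
    (h1 : ηb • A1 = B F1 + β A1) (h2 : ηb • A2 = B F2 + β A2)
    (h3 : α A2 = γ A1) (h4 : α F2 = γ F1) : ηc • B F1 = ηa • B F2 := by
  have e1 := congrArg γ h1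
  have e2 := congrArg α h2
  rw [map_smul, map_add, hγB, hγβ] at e1
  rw [map_smul, map_add, hαB, hαβ, h3, h4, e1] at e2
  have := add_right_cancel e2
  exact add_left_cancel this

lemma pair_abs {V : Type*} [AddCommGroup V] [Module ℂ V] (α : (Fin n → ℂ) → V →ₗ[ℂ] V)
    (A : Set (Fin n → ℂ)) (ζ η : (Fin n → ℂ) → ℂ) (F w : V) (l l' : ℂ)
    (k1 : ∀ a ∈ A, α a (F - l • w) = ζ a • (F - l • w))
    (k2 : ∀ a ∈ A, α a (F - l' • w) = η a • (F - l' • w))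
    (k3 : ∀ a ∈ A, α a w = (ζ a + η a) • w)
    (hne : ∃ a ∈ A, ζ a ≠ η a) (hζ : ∃ a ∈ A, ζ a ≠ 0) (hη : ∃ a ∈ A, η a ≠ 0) :
    F = l • w ∧ F = l' • w := by
  have hd : F - l • w = (F - l' • w) + (l' - l) • w := by module
  suffices h : F - l • w = 0 ∧ F - l' • w = 0 from ⟨sub_eq_zero.1 h.1, sub_eq_zero.1 h.2⟩
  generalize F - l • w = u at *
  generalize F - l' • w = v at *
  have k4 : ∀ a ∈ A, η a • u = ζ a • v := by
    intro a ha
    have := k1 a ha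
    rw [hd, map_add, map_smul, k2 a ha, k3 a ha] at this
    rw [hd]
    rw [← sub_eq_zero] at this ⊢
    rw [← this]
    module
  obtain ⟨a, ha, hne⟩ := hne
  have hs : ζ a - η a ≠ 0 := sub_ne_zero.2 hne
  have e := congrArg (α a) (k4 a ha)
  rw [map_smul, map_smul, k1 a ha, k2 a ha] at e
  have e1 : (ζ a - η a) • (η a • u) = 0 := by
    have := k4 a ha
    have e3 : η a • η a • u = η a • ζ a • v := by rw [this]
    rw [sub_smul, e3, smul_comm (ζ a), e, smul_comm (η a)]; exact sub_self _
  have hu := (smul_eq_zero.1 e1).resolve_left hs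
  have hv := hu
  rw [k4 a ha] at hv
  have fin1 : u = 0 → v = 0 := by
    intro h
    obtain ⟨b, hb, hz⟩ := hζ
    have := k4 b hb
    rw [h, smul_zero] at this
    exact (smul_eq_zero.1 this.symm).resolve_left hz
  have fin2 : v = 0 → u = 0 := by
    intro h
    obtain ⟨b, hb, hz⟩ := hη
    have := k4 b hb
    rw [h, smul_zero] at this
    exact (smul_eq_zero.1 this).resolve_left hz
  by_cases h0 : η a = 0
  · have : ζ a ≠ 0 := by rw [h0] at hne; exact hne
    have hv' := (smul_eq_zero.1 hv).resolve_left this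
    exact ⟨fin2 hv', hv'⟩
  · have hu' := (smul_eq_zero.1 hu).resolve_left h0
    exact ⟨hu', fin1 hu'⟩

section bider
variable {L : Submodule ℂ (E n)} {A : Set (Fin n → ℂ)} {pf : ZMod 2}
  {f : E n →ₗ[ℂ] E n →ₗ[ℂ] E n}

lemma hL (hA : ∀ a ∈ A, hh a ∈ L) {a} (ha : a ∈ A) : hh a ∈ L ⊓ epar n 0 := ⟨hA a ha, hh_epar a⟩

lemma e1 (hf : IsSuperBider n L pf f) {h y z : E n} {p q : ZMod 2} (hh : h ∈ L ⊓ epar n 0)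
    (hy : y ∈ L ⊓ epar n p) (hz : z ∈ L ⊓ epar n q) :
    f (sbL n h y) z = sbL n h (f y z) + sgn (p * q) • sbL n (f h z) y := by
  have := hf.eq1 0 p q h hh y hy z hz
  rwa [zero_mul, sgn_zero, one_smul] at this

lemma e2 (hf : IsSuperBider n L pf f) {h y z : E n} {p q : ZMod 2} (hh : h ∈ L ⊓ epar n 0)
    (hy : y ∈ L ⊓ epar n p) (hz : z ∈ L ⊓ epar n q) :
    f y (sbL n h z) = sbL n (f y h) z + sbL n h (f y z) := by
  have := hf.eq2 p 0 q y hy h hh z hz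
  rwa [mul_zero, sgn_zero, one_smul] at this

/-- Symmetry of the brackets with Cartan elements. -/
lemma tor1 (hf : IsSuperBider n L pf f) (hA : ∀ a ∈ A, hh a ∈ L) {a b} (ha : a ∈ A) (hb : b ∈ A)
    {z : E n} {q} (hz : z ∈ L ⊓ epar n q) :
    sbL n (hh a) (f (hh b) z) = sbL n (hh b) (f (hh a) z) := by
  have := e1 hf (hL hA ha) (hL hA hb) hz
  rw [hh_sb, map_zero, zero_mul, sgn_zero, one_smul, LinearMap.zero_apply] at this
  rw [sb_skew_even (hh_epar b)]
  exact (eq_neg_of_add_eq_zero_left this.symm)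

lemma tor2 (hf : IsSuperBider n L pf f) (hA : ∀ a ∈ A, hh a ∈ L) {a b} (ha : a ∈ A) (hb : b ∈ A)
    {z : E n} {q} (hz : z ∈ L ⊓ epar n q) :
    sbL n (hh a) (f z (hh b)) = sbL n (hh b) (f z (hh a)) := by
  have := e2 hf (hL hA ha) hz (hL hA hb)
  rw [hh_sb, map_zero] at this
  rw [sb_skew_even (hh_epar b)]
  exact (eq_neg_of_add_eq_zero_right this.symm)

lemma cent1 (hf : IsSuperBider n L pf f) (hA : ∀ a ∈ A, hh a ∈ L) {a b c} (ha : a ∈ A)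
    (hb : b ∈ A) (hc : c ∈ A) {x : E n} {p} {η} (hx : WtV L A x p η) :
    η c • sbL n (f (hh a) (hh b)) x = η a • sbL n (f (hh c) (hh b)) x := by
  have par1 : ∀ u v, u ∈ A → v ∈ A → f (hh u) (hh v) ∈ epar n pf := by
    intro u v hu hv
    have := (hf.maps 0 0 _ (hL hA hu) _ (hL hA hv)).2
    simpa using this
  have hB : ∀ u v w, u ∈ A → v ∈ A → w ∈ A →
      sbL n (hh w) (sbL n (f (hh u) (hh v)) x) =
        sbL n (sbL n (hh w) (f (hh u) (hh v))) x + η w • sbL n (f (hh u) (hh v)) x := by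
    intro u v w hu hv hw
    rw [jac_even (hh_epar w) (par1 u v hu hv) hx.mem.2, hx.wt w hw, map_smul]
  have hii : ∀ u v, u ∈ A → v ∈ A → η v • f (hh u) x =
      sbL n (f (hh u) (hh v)) x + sbL n (hh v) (f (hh u) x) := by
    intro u v hu hv
    have := e2 hf (hL hA hv) (hL hA hu) hx.mem
    rwa [hx.wt v hv, map_smul] at this
  exact abs_identity (sbL n (hh a)) (sbL n (hh b)) (sbL n (hh c)) ((sbL n).flip x)
    (hh_ad_comm a b) (hh_ad_comm c b) (η a) (η b) (η c)
    (f (hh a) x) (f (hh c) x) (f (hh a) (hh b)) (f (hh c) (hh b))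
    (hB c b a hc hb ha) (hB a b c ha hb hc) (hii a b ha hb) (hii c b hc hb)
    (tor1 hf hA ha hc hx.mem) (tor1 hf hA ha hc (hL hA hb))

lemma cent2 (hf : IsSuperBider n L pf f) (hA : ∀ a ∈ A, hh a ∈ L) {a b c} (ha : a ∈ A)
    (hb : b ∈ A) (hc : c ∈ A) {x : E n} {p} {η} (hx : WtV L A x p η) :
    η c • sbL n (f (hh b) (hh a)) x = η a • sbL n (f (hh b) (hh c)) x := by
  have par1 : ∀ u v, u ∈ A → v ∈ A → f (hh u) (hh v) ∈ epar n pf := by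
    intro u v hu hv
    have := (hf.maps 0 0 _ (hL hA hu) _ (hL hA hv)).2
    simpa using this
  have hB : ∀ u v w, u ∈ A → v ∈ A → w ∈ A →
      sbL n (hh w) (sbL n (f (hh u) (hh v)) x) =
        sbL n (sbL n (hh w) (f (hh u) (hh v))) x + η w • sbL n (f (hh u) (hh v)) x := by
    intro u v w hu hv hw
    rw [jac_even (hh_epar w) (par1 u v hu hv) hx.mem.2, hx.wt w hw, map_smul]
  have hii : ∀ u v, u ∈ A → v ∈ A → η v • f x (hh u) =
      sbL n (f (hh v) (hh u)) x + sbL n (hh v) (f x (hh u)) := by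
    intro u v hu hv
    have := e1 hf (hL hA hv) hx.mem (hL hA hu)
    rw [hx.wt v hv, map_smul, mul_zero, sgn_zero, one_smul, LinearMap.smul_apply] at this
    rw [this, add_comm]
  exact abs_identity (sbL n (hh a)) (sbL n (hh b)) (sbL n (hh c)) ((sbL n).flip x)
    (hh_ad_comm a b) (hh_ad_comm c b) (η a) (η b) (η c)
    (f x (hh a)) (f x (hh c)) (f (hh b) (hh a)) (f (hh b) (hh c))
    (hB b c a hb hc ha) (hB b a c hb ha hc) (hii a b ha hb) (hii c b hc hb)
    (tor2 hf hA ha hc hx.mem) (tor2 hf hA ha hc (hL hA hb))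

lemma cent (hf : IsSuperBider n L pf f) (hA : ∀ a ∈ A, hh a ∈ L) {a b c d} (ha : a ∈ A)
    (hb : b ∈ A) (hc : c ∈ A) (hd : d ∈ A) {x : E n} {p} {η} (hx : WtV L A x p η) :
    (η c * η d) • sbL n (f (hh a) (hh b)) x = (η a * η b) • sbL n (f (hh c) (hh d)) x := by
  rw [mul_comm, mul_smul, cent1 hf hA ha hb hc hx, smul_comm, cent2 hf hA hb hc hd hx, smul_smul]

lemma lam1 (hf : IsSuperBider n L pf f) (hA : ∀ a ∈ A, hh a ∈ L)
    (h00 : ∀ a ∈ A, ∀ b ∈ A, f (hh a) (hh b) = 0)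
    {x : E n} {p} {η} (hx : Good L A x p η) :
    ∃ l : ℂ, ∀ a ∈ A, f (hh a) x = l • sbL n (hh a) x := by
  have h1 : ∀ a ∈ A, ∃ c : ℂ, f (hh a) x = c • x := by
    intro a ha
    refine hx.one _ (hf.maps 0 p _ (hL hA ha) _ hx.mem).1 ?_
    intro b hb
    have := e2 hf (hL hA hb) (hL hA ha) hx.mem
    rw [hx.wt b hb, map_smul, h00 a ha b hb, map_zero, LinearMap.zero_apply, zero_add] at this
    exact this.symm
  obtain ⟨a0, ha0, hne⟩ := hx.nz
  obtain ⟨c0, hc0⟩ := h1 a0 ha0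
  refine ⟨c0 / η a0, fun a ha => ?_⟩
  obtain ⟨c, hc⟩ := h1 a ha
  have := tor1 hf hA ha ha0 hx.mem
  rw [hc0, hc, map_smul, map_smul, hx.wt a ha, hx.wt a0 ha0, smul_smul, smul_smul] at this
  have h2 : c0 * η a = c * η a0 := smul_left_injective ℂ hx.ne this
  rw [hc, hx.wt a ha, smul_smul]
  congr 1
  field_simp
  linear_combination -h2

lemma lam2 (hf : IsSuperBider n L pf f) (hA : ∀ a ∈ A, hh a ∈ L)
    (h00 : ∀ a ∈ A, ∀ b ∈ A, f (hh a) (hh b) = 0)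
    {x : E n} {p} {η} (hx : Good L A x p η) :
    ∃ l : ℂ, ∀ a ∈ A, f x (hh a) = l • sbL n x (hh a) := by
  have h1 : ∀ a ∈ A, ∃ c : ℂ, f x (hh a) = c • x := by
    intro a ha
    refine hx.one _ (hf.maps p 0 _ hx.mem _ (hL hA ha)).1 ?_
    intro b hb
    have := e1 hf (hL hA hb) hx.mem (hL hA ha)
    rw [hx.wt b hb, map_smul, h00 b hb a ha, map_zero, LinearMap.zero_apply, smul_zero, add_zero]
      at this
    exact this.symm
  obtain ⟨a0, ha0, hne⟩ := hx.nz
  obtain ⟨c0, hc0⟩ := h1 a0 ha0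
  refine ⟨- c0 / η a0, fun a ha => ?_⟩
  obtain ⟨c, hc⟩ := h1 a ha
  have := tor2 hf hA ha ha0 hx.mem
  rw [hc0, hc, map_smul, map_smul, hx.wt a ha, hx.wt a0 ha0, smul_smul, smul_smul] at this
  have h2 : c0 * η a = c * η a0 := smul_left_injective ℂ hx.ne this
  have h3 : sbL n x (hh a) = (- η a) • x := by
    rw [en_smul, ← hx.wt a ha, sb_skew_even (hh_epar a)]; exact (en_n _).symm
  rw [hc, h3, smul_smul]
  congr 1
  field_simp
  linear_combination -h2

lemma wt_sb {y x : E n} {p q ζ η} (hy : WtV L A y p ζ) (hx : WtV L A x q η) {a} (ha : a ∈ A) :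
    sbL n (hh a) (sbL n y x) = (ζ a + η a) • sbL n y x := by
  rw [jac_even (hh_epar a) hy.mem.2 hx.mem.2, hy.wt a ha, hx.wt a ha, map_smul, map_smul,
    LinearMap.smul_apply, add_smul]

lemma wt1 (hf : IsSuperBider n L pf f) (hA : ∀ a ∈ A, hh a ∈ L)
    {y x : E n} {p q ζ η} (hy : WtV L A y p ζ) (hx : WtV L A x q η) {l : ℂ}
    (hl : ∀ a ∈ A, f (hh a) x = l • sbL n (hh a) x) {a} (ha : a ∈ A) :
    sbL n (hh a) (f y x - l • sbL n y x) = ζ a • (f y x - l • sbL n y x) := by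
  have := e1 hf (hL hA ha) hy.mem hx.mem
  rw [hl a ha, hx.wt a ha, hy.wt a ha, map_smul, LinearMap.smul_apply, map_smul, map_smul,
    LinearMap.smul_apply, LinearMap.smul_apply, smul_comm _ l, smul_comm _ (η a), mul_comm p q,
    sb_skew hx.mem.2 hy.mem.2] at this
  rw [map_sub, map_smul, wt_sb hy hx ha, smul_sub, this]
  module

lemma wt2 (hf : IsSuperBider n L pf f) (hA : ∀ a ∈ A, hh a ∈ L)
    {y x : E n} {p q ζ η} (hy : WtV L A y p ζ) (hx : WtV L A x q η) {l : ℂ}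
    (hl : ∀ a ∈ A, f y (hh a) = l • sbL n y (hh a)) {a} (ha : a ∈ A) :
    sbL n (hh a) (f y x - l • sbL n y x) = η a • (f y x - l • sbL n y x) := by
  have := e2 hf (hL hA ha) hy.mem hx.mem
  have h3 : sbL n y (hh a) = (- ζ a) • y := by
    rw [en_smul, ← hy.wt a ha, sb_skew_even (hh_epar a)]; exact (en_n _).symm
  rw [hl a ha, hx.wt a ha, h3, map_smul, map_smul, map_smul, 
    LinearMap.smul_apply, LinearMap.smul_apply] at this
  rw [map_sub, map_smul, wt_sb hy hx ha, smul_sub, this]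
  module

lemma pair (hf : IsSuperBider n L pf f) (hA : ∀ a ∈ A, hh a ∈ L)
    {y x : E n} {p q ζ η} (hy : WtV L A y p ζ) (hx : WtV L A x q η) {l l' : ℂ}
    (hl : ∀ a ∈ A, f (hh a) x = l • sbL n (hh a) x)
    (hl' : ∀ a ∈ A, f y (hh a) = l' • sbL n y (hh a))
    (hne : ∃ a ∈ A, ζ a ≠ η a) (hζ : ∃ a ∈ A, ζ a ≠ 0) (hη : ∃ a ∈ A, η a ≠ 0) :
    f y x = l • sbL n y x ∧ f y x = l' • sbL n y x := by
  have k1 := fun a (ha : a ∈ A) => wt1 hf hA hy hx hl ha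
  have k2 := fun a (ha : a ∈ A) => wt2 hf hA hy hx hl' ha
  have k3 := fun a (ha : a ∈ A) => wt_sb hy hx ha
  exact pair_abs (fun a => sbL n (hh a)) A ζ η _ _ l l' k1 k2 k3 hne hζ hη
end bider

section final
variable {L : Submodule ℂ (E n)} {A : Set (Fin n → ℂ)} {pf : ZMod 2}
  {f : E n →ₗ[ℂ] E n →ₗ[ℂ] E n}

theorem core_final (hf : IsSuperBider n L pf f) (hA : ∀ a ∈ A, hh a ∈ L)
    (G : E n → ZMod 2 → ((Fin n → ℂ) → ℂ) → Prop)
    (hG : ∀ x p η, G x p η → Good L A x p η) (c : ℂ)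
    (hc1 : ∀ x p η, G x p η → ∀ a ∈ A, f (hh a) x = c • sbL n (hh a) x)
    (hc2 : ∀ x p η, G x p η → ∀ a ∈ A, f x (hh a) = c • sbL n x (hh a))
    (hself : ∀ x p η, G x p η → ∃ y q ζ, G y q ζ ∧ ∃ z r θ, G z r θ ∧ (∃ a ∈ A, ζ a ≠ η a) ∧
      ∃ s : ℂ, s ≠ 0 ∧ sbL n y x = s • z)
    (hLs : ∀ x p η, G x p η → sbL n x x ∈ L)
    (hex : ∃ x p η, G x p η)
    (Gen : ∀ P : Submodule ℂ (E n), (∀ x p η, G x p η → x ∈ P) →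
      (∀ a b p q, a ∈ P → b ∈ P → a ∈ L ⊓ epar n p → b ∈ L ⊓ epar n q → sbL n a b ∈ L →
        sbL n a b ∈ P) → L ≤ P) :
    ∀ x ∈ L, ∀ y ∈ L, f x y = c • sbL n x y := by
  have hcs : ∀ q, c * sgn (pf * q) = c := by
    have hz : ∀ p : ZMod 2, p = 0 ∨ p = 1 := by decide
    rcases hz pf with h | h
    · intro q; rw [h, zero_mul, sgn_zero, mul_one]
    · obtain ⟨x, p, η, hx⟩ := hex
      have g := hG _ _ _ hx
      obtain ⟨a, ha, hne⟩ := g.nz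
      have h1 := hc1 _ _ _ hx a ha
      have h2 := (hf.maps 0 p _ (hL hA ha) _ g.mem).2
      rw [h1, g.wt a ha, smul_smul, zero_add, h] at h2
      have h3 := epar_disj ((epar n p).smul_mem (c * η a) g.mem.2) h2
      have h4 : c = 0 := by
        rcases smul_eq_zero.1 h3 with h5 | h5
        · exact (mul_eq_zero.1 h5).resolve_right hne
        · exact absurd h5 g.ne
      intro q; rw [h4, zero_mul]
  have hpair : ∀ x p η y q ζ, G x p η → G y q ζ → (∃ a ∈ A, η a ≠ ζ a) →
      f x y = c • sbL n x y := by
    intro x p η y q ζ hx hy hne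
    exact (pair hf hA (hG _ _ _ hx).toWtV (hG _ _ _ hy).toWtV (hc1 _ _ _ hy) (hc2 _ _ _ hx) hne
      (hG _ _ _ hx).nz (hG _ _ _ hy).nz).1
  have hxx : ∀ x p η, G x p η → f x x = c • sbL n x x := by
    intro x p η hx
    have gx := hG _ _ _ hx
    obtain ⟨y, q, ζ, hy, z, r, θ, hz, hne, s, hs, hsz⟩ := hself x p η hx
    have gy := hG _ _ _ hy
    have gz := hG _ _ _ hz
    obtain ⟨α, hα⟩ := gx.one (f x x - c • sbL n x x)
      (L.sub_mem (hf.maps p p _ gx.mem _ gx.mem).1 (L.smul_mem _ (hLs _ _ _ hx)))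
      (fun a ha => wt1 hf hA gx.toWtV gx.toWtV (hc1 _ _ _ hx) ha)
    have hα' : f x x = c • sbL n x x + α • x := by rw [← hα]; module
    have hxy : f x y = c • sbL n x y := by
      refine hpair _ _ _ _ _ _ hx hy ?_
      obtain ⟨a, ha, h⟩ := hne
      exact ⟨a, ha, h.symm⟩
    have hθ : ∀ a ∈ A, θ a = ζ a + η a := by
      intro a ha
      have := wt_sb gy.toWtV gx.toWtV ha
      rw [hsz, map_smul, gz.wt a ha, smul_smul, smul_smul] at this
      have := smul_left_injective ℂ gz.ne this
      have h2 : s * θ a = s * (ζ a + η a) := by rw [this, mul_comm]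
      exact mul_left_cancel₀ hs h2
    have hxz : f x z = c • sbL n x z := by
      refine hpair _ _ _ _ _ _ hx hz ?_
      obtain ⟨a, ha, h⟩ := gy.nz
      refine ⟨a, ha, ?_⟩
      rw [hθ a ha]; intro h'; apply h; linear_combination -h'
    have hmain := hf.eq2 p q p x gx.mem y gy.mem x gx.mem
    have hjac := jacobi gx.mem.2 gy.mem.2 gx.mem.2
    have h5 : f x (sbL n y x) = c • sbL n x (sbL n y x) := by
      rw [hsz, map_smul, hxz, map_smul, smul_comm]
    have hsg : sgn ((pf + p) * q) * c = c * sgn (p * q) := by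
      rw [add_mul, sgn_add]; linear_combination sgn (p * q) * hcs q
    rw [h5, hjac, hxy, hα', map_smul, LinearMap.smul_apply, map_add, map_smul, map_smul, smul_add,
      smul_add, smul_smul, smul_smul, hsg, ← add_assoc] at hmain
    have h6 := left_eq_add.1 hmain
    rw [hsz, smul_smul, smul_smul] at h6
    have hsn : sgn ((pf + p) * q) ≠ 0 := by
      intro h; have := sgn_sq ((pf + p) * q); rw [h] at this; simp at this
    have h7 := (smul_eq_zero.1 h6).resolve_right gz.ne
    have : α = 0 := by
      rcases mul_eq_zero.1 h7 with h | h
      · exact (mul_eq_zero.1 h).resolve_left hsn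
      · exact absurd h hs
    rw [hα', this, zero_smul, add_zero]
  have hgg : ∀ x p η y q ζ, G x p η → G y q ζ → f x y = c • sbL n x y := by
    intro x p η y q ζ hx hy
    by_cases hne : ∃ a ∈ A, η a ≠ ζ a
    · exact hpair _ _ _ _ _ _ hx hy hne
    · push Not at hne
      obtain ⟨β, hβ⟩ := (hG _ _ _ hx).one y (hG _ _ _ hy).mem.1 (fun a ha => by
        rw [hne a ha]; exact (hG _ _ _ hy).wt a ha)
      rw [hβ, map_smul, map_smul, hxx _ _ _ hx, smul_comm]
  have step1 : ∀ x p η, G x p η → ∀ z ∈ L, f x z = c • sbL n x z := by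
    intro x p η hx z hz
    have gx := hG _ _ _ hx
    have : L ≤ LinearMap.ker (f x - c • sbL n x) := by
      apply Gen
      · intro y q ζ hy
        rw [LinearMap.mem_ker, LinearMap.sub_apply, sub_eq_zero]
        exact hgg _ _ _ _ _ _ hx hy
      · intro a b q r ha hb haL hbL _
        rw [LinearMap.mem_ker, LinearMap.sub_apply, sub_eq_zero] at ha hb ⊢
        rw [LinearMap.smul_apply] at ha hb ⊢
        rw [hf.eq2 p q r x gx.mem a haL b hbL, ha, hb, map_smul, map_smul, LinearMap.smul_apply,
          jacobi gx.mem.2 haL.2 hbL.2, smul_add, smul_smul, smul_smul, add_mul, sgn_add]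
        congr 2
        linear_combination sgn (p * q) * hcs q
    have := this hz
    rw [LinearMap.mem_ker, LinearMap.sub_apply, sub_eq_zero] at this
    exact this
  have step2 : ∀ q, ∀ z ∈ L ⊓ epar n q, ∀ x ∈ L, f x z = c • sbL n x z := by
    have : L ≤ ⨅ z : {z : E n × ZMod 2 // z.1 ∈ L ⊓ epar n z.2},
        LinearMap.ker (f.flip z.1.1 - c • (sbL n).flip z.1.1) := by
      apply Gen
      · intro x p η hx
        rw [Submodule.mem_iInf]
        intro z
        rw [LinearMap.mem_ker, LinearMap.sub_apply, sub_eq_zero]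
        exact step1 x p η hx _ z.2.1
      · intro a b p q ha hb haL hbL _
        rw [Submodule.mem_iInf] at ha hb ⊢
        rintro ⟨⟨z, r⟩, hz⟩
        have ha := ha ⟨⟨z, r⟩, hz⟩
        have hb := hb ⟨⟨z, r⟩, hz⟩
        rw [LinearMap.mem_ker, LinearMap.sub_apply, sub_eq_zero] at ha hb ⊢
        rw [LinearMap.smul_apply, LinearMap.flip_apply, LinearMap.flip_apply] at ha hb ⊢
        simp only at ha hb hz ⊢
        rw [hf.eq1 p q r a haL b hbL z hz, ha, hb, map_smul, map_smul, LinearMap.smul_apply,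
          jacobi' haL.2 hbL.2 hz.2, smul_add, smul_smul, mul_comm p pf, mul_comm _ c, hcs,
          smul_comm c]
    intro q z hz x hx
    have h := (Submodule.mem_iInf _).1 (this hx) ⟨⟨z, q⟩, hz⟩
    rw [LinearMap.mem_ker, LinearMap.sub_apply, sub_eq_zero] at h
    exact h
  intro x hx y hy
  have hspan : L ≤ Submodule.span ℂ {x | ∃ p, x ∈ L ⊓ epar n p} := by
    apply Gen
    · intro x p η hx
      exact Submodule.subset_span ⟨p, (hG _ _ _ hx).mem⟩
    · intro a b p q _ _ ha hb hab
      exact Submodule.subset_span ⟨p + q, hab, sb_epar ha.2 hb.2⟩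
  have : Submodule.span ℂ {x | ∃ p, x ∈ L ⊓ epar n p} ≤ LinearMap.ker (f x - c • sbL n x) := by
    rw [Submodule.span_le]
    rintro z ⟨q, hz⟩
    show z ∈ LinearMap.ker (f x - c • sbL n x)
    rw [LinearMap.mem_ker, LinearMap.sub_apply, sub_eq_zero]
    exact step2 q z hz x hx
  have := this (hspan hy)
  rw [LinearMap.mem_ker, LinearMap.sub_apply, sub_eq_zero] at this
  exact this
end final

lemma hh_MT (a : Fin n → ℂ) (T : Finset (Fin n)) :
    hh a * MT T = MT T * hh a + (∑ t ∈ T, a t) • MT T := by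
  apply LinearMap.ext; intro g; funext U
  show (hh a (MT T g)) U = (MT T (hh a g)) U + (∑ t ∈ T, a t) * (MT T g) U
  rw [hh_apply, MT_apply, MT_apply, hh_apply]
  split_ifs with h
  · rw [← Finset.sum_sdiff h]; ring
  · simp

lemma hh_pd (a : Fin n → ℂ) (i : Fin n) :
    hh a * pd n i = pd n i * hh a - a i • pd n i := by
  apply LinearMap.ext; intro g; funext S
  show (hh a (pd n i g)) S = (pd n i (hh a g)) S - a i * (pd n i g) S
  rw [hh_apply, pd_apply, pd_apply, hh_apply]
  split_ifs with h
  · simp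
  · rw [Finset.sum_insert h]; ring

lemma wt_MT (a : Fin n → ℂ) (T : Finset (Fin n)) (i : Fin n) :
    sbL n (hh a) (MT T * pd n i) = (∑ t ∈ T, a t - a i) • (MT T * pd n i) := by
  rw [sb_even_left (hh_epar a), ← mul_assoc, hh_MT, add_mul, mul_assoc, hh_pd, mul_sub,
    smul_mul_assoc, mul_smul_comm, mul_assoc]
  module

lemma wt_pd (a : Fin n → ℂ) (i : Fin n) :
    sbL n (hh a) (pd n i) = (- a i) • pd n i := by
  rw [sb_even_left (hh_epar a), hh_pd]; module

lemma MTpd_epar (T : Finset (Fin n)) (i : Fin n) : MT T * pd n i ∈ epar n ((T.card : ZMod 2) + 1) :=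
  epar_mul (MT_epar T) (pd_epar i)

lemma mulOp_one (g : Lambda n) : mulOp n g (mono n ∅) = g := by
  funext U
  show lmulFun n g (mono n ∅) U = g U
  unfold lmulFun mono
  rw [Finset.sum_eq_single U]
  · simp [inversions, msign]
  · intro S hS hne
    have : U \ S ≠ ∅ := by
      rw [Ne, Finset.sdiff_eq_empty_iff_subset]
      intro h; exact hne (Finset.Subset.antisymm (Finset.mem_powerset.1 hS) h)
    simp [this]
  · simp

lemma pd_mono_single (i k : Fin n) : pd n i (mono n {k}) = if i = k then mono n ∅ else 0 := by
  funext S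
  rw [pd_apply]
  by_cases hik : i = k
  · subst hik
    simp only [if_true, mono]
    by_cases hS : S = ∅
    · subst hS; simp [eps, msign]
    · have : i ∉ S → insert i S ≠ {i} := by
        intro hi h
        apply hS
        rw [Finset.eq_empty_iff_forall_notMem]
        intro x hx
        have : x ∈ ({i} : Finset (Fin n)) := h ▸ Finset.mem_insert_of_mem hx
        rw [Finset.mem_singleton] at this
        exact hi (this ▸ hx)
      by_cases hi : i ∈ S
      · simp [hi, hS]
      · simp [hi, hS, this hi]
  · have : insert i S ≠ {k} := by
      intro h
      have : i ∈ ({k} : Finset (Fin n)) := h ▸ Finset.mem_insert_self _ _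
      exact hik (Finset.mem_singleton.1 this)
    simp [hik, mono, this]

lemma Wmap_mono (F : Fin n → Lambda n) (k : Fin n) : Wmap n F (mono n {k}) = F k := by
  show (∑ i, mulOp n (F i) * pd n i) (mono n {k}) = F k
  rw [LinearMap.sum_apply, Finset.sum_eq_single k]
  · show mulOp n (F k) (pd n k (mono n {k})) = _
    rw [pd_mono_single, if_pos rfl, mulOp_one]
  · intro i _ hik
    show mulOp n (F i) (pd n i (mono n {k})) = _
    rw [pd_mono_single, if_neg hik, map_zero]
  · simp

lemma Wn_eq {u : E n} (hu : u ∈ Wn n) : u = Wmap n (fun k => u (mono n {k})) := by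
  obtain ⟨F, rfl⟩ := hu
  congr 1; funext k; exact (Wmap_mono F k).symm

lemma hh_mono (a : Fin n → ℂ) (S : Finset (Fin n)) : hh a (mono n S) = (∑ s ∈ S, a s) • mono n S := by
  funext U
  rw [hh_apply]
  show _ = (∑ s ∈ S, a s) * mono n S U
  unfold mono
  split_ifs with h
  · rw [h]
  · simp

lemma wt_coef {a : Fin n → ℂ} {u : E n} {s : ℂ} (h : sbL n (hh a) u = s • u) (k : Fin n)
    (S : Finset (Fin n)) : (∑ t ∈ S, a t - a k - s) * u (mono n {k}) S = 0 := by
  rw [sb_even_left (hh_epar a)] at h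
  have h1 := congrFun (congrArg (fun D : E n => D (mono n {k})) h) S
  have h2 : (hh a (u (mono n {k}))) S - (u (hh a (mono n {k}))) S = s * u (mono n {k}) S := h1
  rw [hh_apply, hh_mono, map_smul, Finset.sum_singleton] at h2
  have h3 : (a k • u (mono n {k})) S = a k * u (mono n {k}) S := rfl
  rw [h3] at h2
  linear_combination h2

def ee (i j : Fin n) : Fin n → ℂ := fun k => (if k = i then 1 else 0) - (if k = j then 1 else 0)

def vv (S : Finset (Fin n)) (k p : Fin n) : ℂ := (if p ∈ S then 1 else 0) - (if p = k then 1 else 0)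

lemma ee_sum (S : Finset (Fin n)) (k p q : Fin n) :
    ∑ t ∈ S, ee p q t - ee p q k = vv S k p - vv S k q := by
  unfold ee vv
  rw [Finset.sum_sub_distrib]
  simp only [Finset.sum_ite_eq', eq_comm (a := k)]
  ring

lemma vv_T {S T : Finset (Fin n)} {i k : Fin n} (hT : T.Nonempty) (hi : i ∉ T)
    (h : ∀ p q, vv S k p - vv S k q = vv T i p - vv T i q) : k = i ∧ S = T := by
  obtain ⟨t, ht⟩ := hT
  have hti : t ≠ i := by rintro rfl; exact hi ht
  have h1 := h t i
  unfold vv at h1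
  simp only [ht, hi, hti, if_true, if_false] at h1
  have hki : k = i ∧ i ∉ S := by
    by_cases a1 : t ∈ S <;> by_cases a2 : t = k <;> by_cases a3 : i ∈ S <;> by_cases a4 : i = k <;>
      simp only [a1, a2, a3, a4, if_true, if_false] at h1 <;>
      first
        | (exfalso; norm_num at h1; done)
        | exact ⟨a4.symm, a3⟩
        | (exfalso; simp_all; done)
        | (exfalso; simp_all; norm_num at h1)
  obtain ⟨rfl, hS⟩ := hki
  refine ⟨rfl, ?_⟩
  ext p
  rcases eq_or_ne p k with rfl | a3
  · simp [hS, hi]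
  have h2 := h p k
  unfold vv at h2
  simp only [hS, hi, if_false, if_true] at h2
  by_cases a1 : p ∈ S <;> by_cases a2 : p ∈ T <;> simp [a1, a2, a3] at h2 ⊢

lemma vv_D {S : Finset (Fin n)} {i k : Fin n}
    (h : ∀ p q, vv S k p - vv S k q = vv ∅ i p - vv ∅ i q) : k = i ∧ (S = ∅ ∨ S = Finset.univ) := by
  have hki : k = i := by
    by_contra hne
    have h1 := h k i
    have hne' : i ≠ k := fun h => hne h.symm
    unfold vv at h1
    by_cases a1 : k ∈ S <;> by_cases a2 : i ∈ S <;> simp [a1, a2, hne, hne'] at h1 <;> norm_num at h1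
  subst hki
  refine ⟨rfl, ?_⟩
  by_cases hk : k ∈ S
  · right
    rw [Finset.eq_univ_iff_forall]
    intro p
    have h1 := h p k
    unfold vv at h1
    by_contra hp
    simp [hk, hp] at h1
  · left
    rw [Finset.eq_empty_iff_forall_notMem]
    intro p hp
    have h1 := h p k
    unfold vv at h1
    simp [hk, hp] at h1

lemma mono_decomp1 {g : Lambda n} {T : Finset (Fin n)} (h : ∀ S, S ≠ T → g S = 0) :
    g = g T • mono n T := by
  funext S
  show g S = g T * mono n T S
  unfold mono
  split_ifs with hS
  · rw [hS, mul_one]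
  · rw [h S hS, mul_zero]

lemma one_T {u : E n} (hu : u ∈ Wn n) {T : Finset (Fin n)} {i : Fin n}
    (h : ∀ S k, u (mono n {k}) S ≠ 0 → k = i ∧ S = T) : ∃ c : ℂ, u = c • (MT T * pd n i) := by
  refine ⟨u (mono n {i}) T, ?_⟩
  rw [Wn_eq hu]
  show ∑ k, mulOp n (u (mono n {k})) * pd n k = _
  rw [Finset.sum_eq_single i]
  · have : u (mono n {i}) = u (mono n {i}) T • mono n T :=
      mono_decomp1 fun S hS => by
        by_contra h0; exact hS (h S i h0).2
    rw [Wmap_mono]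
    conv_lhs => rw [this]
    rw [map_smul, smul_mul_assoc]
  · intro k _ hk
    have : u (mono n {k}) = 0 := by
      funext S; by_contra h0; exact hk (h S k h0).1
    rw [this, map_zero, zero_mul]
  · simp

lemma one_D {u : E n} (hu : u ∈ Wn n) {i : Fin n}
    (h : ∀ S k, u (mono n {k}) S ≠ 0 → k = i ∧ (S = ∅ ∨ S = Finset.univ)) :
    ∃ c d : ℂ, u = c • pd n i + d • (MT Finset.univ * pd n i) := by
  have hz : (Finset.univ : Finset (Fin n)) ≠ ∅ := by
    intro h0; have := Finset.mem_univ i; rw [h0] at this; simp at this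
  refine ⟨u (mono n {i}) ∅, u (mono n {i}) Finset.univ, ?_⟩
  rw [Wn_eq hu]
  show ∑ k, mulOp n (u (mono n {k})) * pd n k = _
  rw [Finset.sum_eq_single i]
  · have : u (mono n {i}) = u (mono n {i}) ∅ • mono n ∅ +
        u (mono n {i}) Finset.univ • mono n Finset.univ := by
      funext S
      show u (mono n {i}) S = u (mono n {i}) ∅ * mono n ∅ S +
        u (mono n {i}) Finset.univ * mono n Finset.univ S
      unfold mono
      by_cases h1 : S = ∅
      · subst h1; simp [hz.symm]
      · by_cases h2 : S = Finset.univ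
        · subst h2; simp [hz]
        · simp only [h1, h2, if_false, mul_zero, add_zero]
          by_contra h0
          rcases (h S i h0).2 with h3 | h3
          · exact h1 h3
          · exact h2 h3
    rw [Wmap_mono]
    conv_lhs => rw [this]
    rw [map_add, map_smul, map_smul, add_mul, smul_mul_assoc, smul_mul_assoc]
    have e : mulOp n (mono n ∅) = 1 := MT_empty
    rw [e, one_mul]
  · intro k _ hk
    have : u (mono n {k}) = 0 := by
      funext S; by_contra h0; exact hk (h S k h0).1
    rw [this, map_zero, zero_mul]
  · simp

lemma MTpd_ne (T : Finset (Fin n)) (i : Fin n) : MT T * pd n i ≠ 0 := by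
  intro h
  have h1 := congrFun (congrArg (fun D : E n => D (mono n {i})) h) T
  have h2 : (MT T (pd n i (mono n {i}))) T = 0 := h1
  rw [pd_mono_single, if_pos rfl, mulOp_one] at h2
  simp [mono] at h2

lemma sgn_ins (j : Fin n) (R : Finset (Fin n)) (hj : j ∉ R) :
    sgn (1 * (((insert j R).card : ZMod 2) + 1)) = msign R.card := by
  rw [one_mul, Finset.card_insert_of_notMem hj, sgn_add, sgn_cast, sgn_one, msign_add]
  simp [msign]

/-- `[∂_j, x_j x_R ∂_k] = ± x_R ∂_k`. -/
lemma br_pd (j k : Fin n) (R : Finset (Fin n)) (hj : j ∉ R) :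
    sbL n (pd n j) (MT (insert j R) * pd n k) = eps j R • (MT R * pd n k) := by
  rw [sb_hom (pd_epar j) (MTpd_epar _ k), sgn_ins j R hj, MT_insert j R hj]
  have key : ∀ {R : Type} [Ring R] [Algebra ℂ R] (d X M k : R) (e s : ℂ), d * X = 1 - X * d →
      d * M = s • (M * d) → k * d + d * k = 0 →
      d * ((e • (X * M)) * k) - s • (((e • (X * M)) * k) * d) = e • (M * k) := by
    intro R _ _ d X M k e s h1 h2 h3
    have h3' : k * d = - (d * k) := eq_neg_of_add_eq_zero_left h3
    have h4 : d * (X * M * k) = M * k - s • (X * M * (d * k)) := by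
      rw [← mul_assoc, ← mul_assoc, h1, sub_mul, one_mul, mul_assoc X d M, h2, sub_mul]
      simp only [mul_smul_comm, smul_mul_assoc, mul_assoc]
    have h5 : X * M * k * d = - (X * M * (d * k)) := by
      rw [mul_assoc (X * M), h3', mul_neg]
    simp only [smul_mul_assoc, mul_smul_comm]
    rw [h4, h5, smul_neg]
    module
  refine key _ _ _ _ _ _ (pd_XX_self j) (pd_MT j R hj) ?_
  rw [pd_anti k j]; exact neg_add_cancel _

lemma pd_MT_ins (j : Fin n) (R : Finset (Fin n)) (hj : j ∉ R) :
    pd n j * MT (insert j R) = eps j R • (MT R - XX j * (pd n j * MT R)) := by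
  rw [MT_insert j R hj, mul_smul_comm, ← mul_assoc, pd_XX_self, sub_mul, one_mul, mul_assoc]

lemma Om_XX (j : Fin n) : MT Finset.univ * XX j = 0 := by
  rw [MT_XX, XX_MT_mem j _ (Finset.mem_univ j), smul_zero]

lemma br_Om (j k : Fin n) (R : Finset (Fin n)) (hj : j ∉ R) (hk : k ∉ insert j R) :
    sbL n (MT Finset.univ * pd n j) (MT (insert j R) * pd n k) =
      eps j R • (MT Finset.univ * (MT R * pd n k)) := by
  rw [sb_hom (MTpd_epar _ j) (MTpd_epar _ k)]
  have h1 : MT (insert j R) * pd n k * (MT Finset.univ * pd n j) = 0 := by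
    have : MT (insert j R) * pd n k = msign (insert j R).card • (pd n k * MT (insert j R)) := by
      rw [pd_MT k _ hk, smul_smul, msign_sq, one_smul]
    rw [this, smul_mul_assoc, mul_assoc, ← mul_assoc (MT (insert j R)),
      MT_MT_meet (insert j R) Finset.univ j (by simp) (by simp), zero_mul, mul_zero, smul_zero]
  rw [h1, smul_zero, sub_zero, mul_assoc, ← mul_assoc (pd n j), pd_MT_ins j R hj, smul_mul_assoc,
    sub_mul, mul_smul_comm, mul_sub, mul_assoc (XX j), ← mul_assoc (MT Finset.univ) (XX j),
    Om_XX, zero_mul, sub_zero]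

def Dd (ε : ℂ) (i : Fin n) : E n := pd n i - ε • (MT Finset.univ * pd n i)

lemma br_D1 (ε : ℂ) (j k : Fin n) (hjk : k ≠ j) :
    sbL n (Dd ε j) (XX j * pd n k) = Dd ε k := by
  have h1 := br_pd j k ∅ (by simp)
  have h2 := br_Om j k ∅ (by simp) (by simpa using hjk)
  have he : eps j (∅ : Finset (Fin n)) = 1 := by simp [eps, msign]
  rw [he, one_smul, MT_empty, one_mul] at h1 h2
  unfold Dd
  rw [map_sub, map_smul, LinearMap.sub_apply, LinearMap.smul_apply]
  have e : insert j (∅ : Finset (Fin n)) = {j} := rfl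
  rw [e] at h1 h2
  rw [h1, h2]

lemma br_D2 (ε : ℂ) (j k : Fin n) (R : Finset (Fin n)) (hj : j ∉ R) (hk : k ∉ insert j R)
    (hR : R.Nonempty) :
    sbL n (Dd ε j) (MT (insert j R) * pd n k) = eps j R • (MT R * pd n k) := by
  obtain ⟨r, hr⟩ := hR
  unfold Dd
  rw [map_sub, map_smul, LinearMap.sub_apply, LinearMap.smul_apply, br_pd j k R hj,
    br_Om j k R hj hk, ← mul_assoc, MT_MT_meet Finset.univ R r (by simp) hr, zero_mul, smul_zero,
    smul_zero, sub_zero]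

lemma XXpd_epar (i j : Fin n) : XX i * pd n j ∈ epar n 0 := by
  have := epar_mul (XX_epar i) (pd_epar j)
  rwa [show (1 + 1 : ZMod 2) = 0 by decide] at this

/-- `[x_T ∂_j, x_j ∂_k] = x_T ∂_k`. -/
lemma br_Tr (T : Finset (Fin n)) (j k : Fin n) (hk : k ∉ T) :
    sbL n (MT T * pd n j) (XX j * pd n k) = MT T * pd n k := by
  rw [sb_even_right (XXpd_epar j k)]
  have key : ∀ {R : Type} [Ring R] [Algebra ℂ R] (d X M k : R) (s : ℂ), d * X = 1 - X * d →
      k * M = s • (M * k) → M * X = s • (X * M) → k * d + d * k = 0 →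
      M * d * (X * k) - X * k * (M * d) = M * k := by
    intro R _ _ d X M k s h1 h2 h4 h3
    have h3' : k * d = - (d * k) := eq_neg_of_add_eq_zero_left h3
    have h5 : M * d * (X * k) = M * k - M * X * (d * k) := by
      rw [mul_assoc, ← mul_assoc d, h1, sub_mul, mul_sub, one_mul]
      simp only [mul_assoc]
    have h6 : X * k * (M * d) = - (M * X * (d * k)) := by
      rw [mul_assoc, ← mul_assoc k, h2, h4]
      simp only [smul_mul_assoc, mul_smul_comm, mul_assoc]
      rw [h3']; simp only [mul_neg, smul_neg]
    rw [h5, h6]; abel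
  refine key _ _ _ _ _ (pd_XX_self j) (pd_MT k T hk) (MT_XX j T) ?_
  rw [pd_anti k j]; exact neg_add_cancel _

lemma hh_ee (i j : Fin n) : hh (ee i j) = XX i * pd n i - XX j * pd n j := by
  have key : ∀ {M : Type} [AddCommGroup M] [Module ℂ M] (v : Fin n → M),
      ∑ k, ee i j k • v k = v i - v j := by
    intro M _ _ v
    unfold ee
    simp only [sub_smul, Finset.sum_sub_distrib, ite_smul, one_smul, zero_smul, Finset.sum_ite_eq',
      Finset.mem_univ, if_true]
  exact key _

lemma hh_ee_comm (i j : Fin n) :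
    XX i * pd n j * (XX j * pd n i) - XX j * pd n i * (XX i * pd n j) = hh (ee i j) := by
  rw [hh_ee]
  have key : ∀ {R : Type} [Ring R] (X Y d e : R), d * X = 1 - X * d → e * Y = 1 - Y * e →
      X * Y + Y * X = 0 → e * d + d * e = 0 → 
      X * e * (Y * d) - Y * d * (X * e) = X * d - Y * e := by
    intro R _ X Y d e h1 h2 h3 h4
    have h3' := eq_neg_of_add_eq_zero_left h3
    have h4' := eq_neg_of_add_eq_zero_left h4
    have h5 : X * e * (Y * d) = X * d - X * Y * (e * d) := by
      rw [mul_assoc, ← mul_assoc e, h2, sub_mul, mul_sub, one_mul]; simp only [mul_assoc]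
    have h6 : Y * d * (X * e) = Y * e - Y * X * (d * e) := by
      rw [mul_assoc, ← mul_assoc d, h1, sub_mul, mul_sub, one_mul]; simp only [mul_assoc]
    rw [h5, h6, h3', h4']
    simp only [neg_mul, mul_neg, neg_neg]; abel
  refine key _ _ _ _ (pd_XX_self i) (pd_XX_self j) ?_ ?_
  · rw [XX_anti i j]; exact neg_add_cancel _
  · rw [pd_anti j i]; exact neg_add_cancel _

lemma lemZ {u : E n} (hu : u ∈ Wn n) (h1 : ∀ i j, i ≠ j → sbL n u (XX i * pd n j) = 0)
    {p q r : Fin n} (hpq : p ≠ q) (hqr : q ≠ r)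
    (h2 : sbL n u (MT {p, q} * pd n r) = 0) : u = 0 := by
  have hc : ∀ i j, i ≠ j → u * (XX i * pd n j) = XX i * pd n j * u := by
    intro i j hij
    have := h1 i j hij
    rw [sb_even_right (XXpd_epar i j)] at this
    exact sub_eq_zero.1 this
  have hcomm : ∀ i j, i ≠ j → sbL n (hh (ee i j)) u = (0:ℂ) • u := by
    intro i j hij
    rw [sb_even_left (hh_epar _), zero_smul, ← hh_ee_comm i j, sub_eq_zero, sub_mul, mul_sub]
    have e1 := hc i j hij
    have e2 := hc j i hij.symm
    congr 1
    · rw [mul_assoc, ← e2, ← mul_assoc, ← e1, mul_assoc]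
    · rw [mul_assoc, ← e1, ← mul_assoc, ← e2, mul_assoc]
  have hS : ∀ S k, u (mono n {k}) S ≠ 0 → S = {k} := by
    intro S k h0
    have hv : ∀ a b, a ≠ b → vv S k a = vv S k b := by
      intro a b hab
      have := wt_coef (hcomm a b hab) k S
      rw [ee_sum] at this
      rcases mul_eq_zero.1 this with h | h
      · linear_combination h
      · exact absurd h h0
    obtain ⟨k', hk'⟩ : ∃ k', k' ≠ k := by
      by_cases h : p = k
      · exact ⟨q, fun h' => hpq (h.trans h'.symm)⟩
      · exact ⟨p, h⟩
    have hk : k ∈ S := by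
      by_contra hk
      have := hv k' k hk'
      unfold vv at this
      by_cases h : k' ∈ S
      · simp [hk, hk', h] at this; norm_num at this
      · simp [hk, hk', h] at this
    ext a
    rw [Finset.mem_singleton]
    constructor
    · intro ha
      by_contra hak
      have := hv a k hak
      unfold vv at this
      simp [hk, ha, hak] at this
    · rintro rfl; exact hk
  have hu' : u = hh (fun k => u (mono n {k}) {k}) := by
    conv_lhs => rw [Wn_eq hu]
    show ∑ k, mulOp n (u (mono n {k})) * pd n k = _
    unfold hh
    refine Finset.sum_congr rfl fun k _ => ?_
    have : u (mono n {k}) = u (mono n {k}) {k} • mono n {k} :=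
      mono_decomp1 fun S hne => by
        by_contra h0; exact hne (hS S k h0)
    conv_lhs => rw [this]
    rw [map_smul, smul_mul_assoc]
  generalize (fun k => u (mono n {k}) {k}) = c at hu'
  have c1 : ∀ i j, i ≠ j → c i = c j := by
    intro i j hij
    have := h1 i j hij
    have hw := wt_MT c {i} j
    rw [hu'] at this
    rw [this, Finset.sum_singleton] at hw
    have := (smul_eq_zero.1 hw.symm).resolve_right (MTpd_ne _ _)
    linear_combination this
  have c2 : c p = 0 := by
    have hw := wt_MT c {p, q} r
    rw [hu'] at h2
    rw [h2, Finset.sum_pair hpq] at hw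
    have := (smul_eq_zero.1 hw.symm).resolve_right (MTpd_ne _ _)
    linear_combination this - c1 q r hqr
  have c3 : c = 0 := by
    funext i
    by_cases h : i = p
    · rw [h, c2]; rfl
    · rw [c1 i p h, c2]; rfl
  rw [hu', c3]
  unfold hh; simp

def wT (T : Finset (Fin n)) (i : Fin n) (a : Fin n → ℂ) : ℂ := ∑ t ∈ T, a t - a i

structure Data (L : Submodule ℂ (E n)) (A : Set (Fin n → ℂ)) (ε : ℂ) : Prop where
  hn : 4 ≤ n
  LW : L ≤ Wn n
  AL : ∀ a ∈ A, hh a ∈ L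
  As : ∀ i j, ee i j ∈ A
  A0 : ε ≠ 0 → ∀ a ∈ A, ∑ i, a i = 0
  ev : ε ≠ 0 → Even n
  Tmem : ∀ T i, T.Nonempty → i ∉ T → MT T * pd n i ∈ L
  Dmem : ∀ i, Dd ε i ∈ L
  Done : ∀ i, ∀ u ∈ L, (∀ a ∈ A, sbL n (hh a) u = wT ∅ i a • u) → ∃ c : ℂ, u = c • Dd ε i

lemma wT_ee (T : Finset (Fin n)) (i p q : Fin n) : wT T i (ee p q) = vv T i p - vv T i q :=
  ee_sum T i p q

lemma exists_notMem_fin (S : Finset (Fin n)) (h : S.card < n) : ∃ k, k ∉ S := by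
  by_contra hc
  push Not at hc
  have : S = Finset.univ := Finset.eq_univ_iff_forall.2 hc
  rw [this] at h; simp at h

section dat
variable {L : Submodule ℂ (E n)} {A : Set (Fin n → ℂ)} {ε : ℂ}

lemma Data.ex2 (d : Data L A ε) (i j : Fin n) : ∃ k, k ≠ i ∧ k ≠ j := by
  obtain ⟨k, hk⟩ := exists_notMem_fin {i, j} (lt_of_le_of_lt Finset.card_le_two (by have := d.hn; omega))
  simp at hk; exact ⟨k, hk⟩

lemma Data.ex3 (d : Data L A ε) (i j l : Fin n) : ∃ k, k ≠ i ∧ k ≠ j ∧ k ≠ l := by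
  obtain ⟨k, hk⟩ := exists_notMem_fin {i, j, l}
    (lt_of_le_of_lt Finset.card_le_three (by have := d.hn; omega))
  simp at hk; exact ⟨k, hk⟩

lemma Data.differ (d : Data L A ε) {S T : Finset (Fin n)} {i k : Fin n} (hT : T.Nonempty)
    (hi : i ∉ T) (h : ¬ (k = i ∧ S = T)) : ∃ a ∈ A, wT S k a ≠ wT T i a := by
  by_contra hc
  push Not at hc
  apply h
  apply vv_T hT hi
  intro p q
  rw [← wT_ee, ← wT_ee]; exact hc _ (d.As p q)

lemma Data.wtT (d : Data L A ε) (T : Finset (Fin n)) (i : Fin n) (hT : T.Nonempty) (hi : i ∉ T) :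
    WtV L A (MT T * pd n i) ((T.card : ZMod 2) + 1) (wT T i) where
  mem := ⟨d.Tmem T i hT hi, MTpd_epar T i⟩
  wt := fun a _ => wt_MT a T i

lemma Data.goodT (d : Data L A ε) (T : Finset (Fin n)) (i : Fin n) (hT : T.Nonempty) (hi : i ∉ T) :
    Good L A (MT T * pd n i) ((T.card : ZMod 2) + 1) (wT T i) where
  toWtV := d.wtT T i hT hi
  nz := by
    obtain ⟨t, ht⟩ := hT
    have hti : t ≠ i := by rintro rfl; exact hi ht
    refine ⟨ee t i, d.As t i, ?_⟩
    rw [wT_ee]; unfold vv; simp [ht, hti, hi]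
  ne := MTpd_ne T i
  one := by
    intro u hu hw
    refine one_T (d.LW hu) fun S k h0 => ?_
    apply vv_T hT hi
    intro p q
    rw [← wT_ee, ← wT_ee]
    rcases mul_eq_zero.1 (wt_coef (hw _ (d.As p q)) k S) with h | h
    · unfold wT at h ⊢; linear_combination h
    · exact absurd h h0

lemma Dd_ne (ε : ℂ) (i : Fin n) : Dd ε i ≠ 0 := by
  intro h
  have h1 := congrFun (congrArg (fun D : E n => D (mono n {i})) h) ∅
  have h2 : (pd n i (mono n {i})) ∅ - ε * (MT Finset.univ (pd n i (mono n {i}))) ∅ = 0 := h1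
  have hz : (Finset.univ : Finset (Fin n)) ≠ ∅ := by
    intro h0; have := Finset.mem_univ i; rw [h0] at this; simp at this
  rw [pd_mono_single, if_pos rfl, mulOp_one] at h2
  simp [mono, hz.symm] at h2

lemma Data.wtD (d : Data L A ε) (i : Fin n) : WtV L A (Dd ε i) 1 (wT ∅ i) where
  mem := by
    refine ⟨d.Dmem i, ?_⟩
    unfold Dd
    refine Submodule.sub_mem _ (pd_epar i) ?_
    by_cases h : ε = 0
    · rw [h, zero_smul]; exact Submodule.zero_mem _
    · refine Submodule.smul_mem _ _ ?_
      have := MTpd_epar Finset.univ i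
      obtain ⟨m, hm⟩ := d.ev h
      rw [Finset.card_univ, Fintype.card_fin] at this
      have e : (n : ZMod 2) = 0 := by
        rw [ZMod.natCast_eq_zero_iff]; omega
      rwa [e, zero_add] at this
  wt := by
    intro a ha
    unfold Dd wT
    rw [map_sub, map_smul, wt_pd, wt_MT]
    by_cases h : ε = 0
    · rw [h]; simp only [zero_smul, sub_zero, Finset.sum_empty, zero_sub]
    · rw [d.A0 h a ha]; simp only [Finset.sum_empty, zero_sub]
      module

lemma Data.goodD (d : Data L A ε) (i : Fin n) : Good L A (Dd ε i) 1 (wT ∅ i) where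
  toWtV := d.wtD i
  nz := by
    obtain ⟨k, hk, _⟩ := d.ex2 i i
    refine ⟨ee i k, d.As i k, ?_⟩
    rw [wT_ee]; unfold vv; simp [hk]
  ne := Dd_ne ε i
  one := d.Done i

/-! ### Vanishing on the torus -/

lemma cross {u : E n} {p : ZMod 2} (hu : u ∈ epar n p) {i i' j : Fin n} (h1 : i' ≠ i) (h2 : j ≠ i)
    (h3 : j ≠ i') (hD : sbL n u (Dd ε i') = 0) (hDp : Dd ε i' ∈ epar n 1)
    (hM : sbL n u (MT {i', i} * pd n j) = 0) : sbL n u (XX i * pd n j) = 0 := by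
  have hb := br_D2 ε i' j {i} (by simpa using h1) (by simp [h2, h3]) (by simp)
  have hj := jacobi hu hDp (MTpd_epar {i', i} j)
  rw [hD, hM, map_zero, map_zero, LinearMap.zero_apply, smul_zero, add_zero] at hj
  have e : insert i' ({i} : Finset (Fin n)) = {i', i} := rfl
  rw [e] at hb
  rw [hb, map_smul] at hj
  exact (smul_eq_zero.1 hj).resolve_left (eps_ne _ _)

variable {pf : ZMod 2} {f : E n →ₗ[ℂ] E n →ₗ[ℂ] E n}

lemma cent_zero (d : Data L A ε) (hf : IsSuperBider n L pf f) {a b} (ha : a ∈ A)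
    (hb : b ∈ A) {x : E n} {p} {η} (hx : Good L A x p η) (h : η a * η b = 0) :
    sbL n (f (hh a) (hh b)) x = 0 := by
  obtain ⟨c, hc, hne⟩ := hx.nz
  have := cent hf d.AL ha hb hc hc hx.toWtV
  rw [h, zero_smul] at this
  exact (smul_eq_zero.1 this).resolve_left (mul_ne_zero hne hne)

lemma h00_disj (d : Data L A ε) (hf : IsSuperBider n L pf f) {p q r s : Fin n}
    (hpq : p ≠ q) (hpr : p ≠ r) (hps : p ≠ s) (hqr : q ≠ r) (hqs : q ≠ s) (hrs : r ≠ s) :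
    f (hh (ee p q)) (hh (ee r s)) = 0 := by
  have hm := hf.maps 0 0 _ (hL d.AL (d.As p q)) _ (hL d.AL (d.As r s))
  have hD : ∀ i, sbL n (f (hh (ee p q)) (hh (ee r s))) (Dd ε i) = 0 := by
    intro i
    refine cent_zero d hf (d.As p q) (d.As r s) (d.goodD i) ?_
    rw [wT_ee, wT_ee]; unfold vv
    by_cases h1 : p = i
    · subst h1; simp [hpr.symm, hps.symm]
    · by_cases h2 : q = i
      · subst h2; simp [hqr.symm, hqs.symm]
      · simp [h1, h2]
  have hT : ∀ T i, T.Nonempty → i ∉ T → wT T i (ee p q) * wT T i (ee r s) = 0 →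
      sbL n (f (hh (ee p q)) (hh (ee r s))) (MT T * pd n i) = 0 := by
    intro T i h1 h2 h3
    exact cent_zero d hf (d.As p q) (d.As r s) (d.goodT T i h1 h2) h3
  have hM1 : ∀ i, i ≠ p → i ≠ q →
      sbL n (f (hh (ee p q)) (hh (ee r s))) (MT {p, q} * pd n i) = 0 := by
    intro i h1 h2
    refine hT _ _ (by simp) (by simp [h1, h2]) ?_
    rw [wT_ee, wT_ee]; unfold vv
    simp [h1.symm, h2.symm]
  have hM2 : ∀ i, i ≠ r → i ≠ s →
      sbL n (f (hh (ee p q)) (hh (ee r s))) (MT {r, s} * pd n i) = 0 := by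
    intro i h1 h2
    refine hT _ _ (by simp) (by simp [h1, h2]) ?_
    rw [wT_ee, wT_ee]; unfold vv
    simp [h1.symm, h2.symm]
  have eqp : ({q, p} : Finset (Fin n)) = {p, q} := Finset.pair_comm q p
  have esr : ({s, r} : Finset (Fin n)) = {r, s} := Finset.pair_comm s r
  refine lemZ (d.LW hm.1) ?_ hpq hqr (hM1 r hpr.symm hqr.symm)
  intro i j hij
  have cr : ∀ i' : Fin n, i' ≠ i → j ≠ i' → 
      sbL n (f (hh (ee p q)) (hh (ee r s))) (MT {i', i} * pd n j) = 0 →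
      sbL n (f (hh (ee p q)) (hh (ee r s))) (XX i * pd n j) = 0 := by
    intro i' h1 h2 h3
    exact cross hm.2 h1 hij.symm h2 (hD i') (d.wtD i').mem.2 h3
  by_cases c1 : (i = p ∨ i = q) ∧ (j = r ∨ j = s)
  · obtain ⟨rfl | rfl, hj⟩ := c1
    · have hjq : j ≠ q := by rcases hj with rfl | rfl <;> [exact hqr.symm; exact hqs.symm]
      exact cr q hpq.symm hjq (eqp ▸ hM1 j hij.symm hjq)
    · have hjp : j ≠ p := by rcases hj with rfl | rfl <;> [exact hpr.symm; exact hps.symm]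
      exact cr p hpq hjp (hM1 j hjp hij.symm)
  · by_cases c2 : (i = r ∨ i = s) ∧ (j = p ∨ j = q)
    · obtain ⟨rfl | rfl, hj⟩ := c2
      · have hjs : j ≠ s := by rcases hj with rfl | rfl <;> [exact hps; exact hqs]
        exact cr s hrs.symm hjs (esr ▸ hM2 j hij.symm hjs)
      · have hjr : j ≠ r := by rcases hj with rfl | rfl <;> [exact hpr; exact hqr]
        exact cr r hrs hjr (hM2 j hjr hij.symm)
    · refine hT {i} j (by simp) (by simpa using hij.symm) ?_
      rw [wT_ee, wT_ee]; unfold vv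
      simp only [Finset.mem_singleton]
      push Not at c1 c2
      by_cases a1 : i = p ∨ i = q
      · have b1 := c1 a1
        have : r ≠ i ∧ s ≠ i := by
          rcases a1 with rfl | rfl
          · exact ⟨hpr.symm, hps.symm⟩
          · exact ⟨hqr.symm, hqs.symm⟩
        simp [this.1, this.2, b1.1.symm, b1.2.symm]
      · by_cases a2 : i = r ∨ i = s
        · have b1 := c2 a2
          have : p ≠ i ∧ q ≠ i := by
            rcases a2 with rfl | rfl
            · exact ⟨hpr, hqr⟩
            · exact ⟨hps, hqs⟩
          simp [this.1, this.2, b1.1.symm, b1.2.symm]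
        · push Not at a1 a2
          simp only [a1.1.symm, a1.2.symm, a2.1.symm, a2.2.symm, if_false]
          by_cases b1 : p = j
          · subst b1; simp [hpr.symm, hps.symm]
          · by_cases b2 : q = j
            · subst b2; simp [hqr.symm, hqs.symm]
            · simp [b1, b2]

lemma h00 (d : Data L A ε) (hf : IsSuperBider n L pf f) :
    ∀ a ∈ A, ∀ b ∈ A, f (hh a) (hh b) = 0 := by
  intro a ha b hb
  have hm := hf.maps 0 0 _ (hL d.AL ha) _ (hL d.AL hb)
  have key : ∀ {p q r s : Fin n}, p ≠ q → p ≠ r → p ≠ s → q ≠ r → q ≠ s → r ≠ s →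
      ∀ T i, T.Nonempty → i ∉ T → wT T i (ee p q) * wT T i (ee r s) ≠ 0 →
      sbL n (f (hh a) (hh b)) (MT T * pd n i) = 0 := by
    intro p q r s h1 h2 h3 h4 h5 h6 T i hT hi hne
    have := cent hf d.AL ha hb (d.As p q) (d.As r s) (d.wtT T i hT hi)
    rw [h00_disj d hf h1 h2 h3 h4 h5 h6, map_zero, LinearMap.zero_apply, smul_zero] at this
    exact (smul_eq_zero.1 this).resolve_left hne
  have p : Fin n := ⟨0, by have := d.hn; omega⟩
  obtain ⟨q, hqp, _⟩ := d.ex2 p p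
  obtain ⟨r, hrp, hrq⟩ := d.ex2 p q
  obtain ⟨s, hsp, hsq, hsr⟩ := d.ex3 p q r
  refine lemZ (d.LW hm.1) ?_ hqp.symm hrq.symm (p := p) (q := q) (r := r) ?_
  · intro i j hij
    obtain ⟨k, hki, hkj⟩ := d.ex2 i j
    obtain ⟨l, hli, hlj, hlk⟩ := d.ex3 i j k
    refine key (p := i) (q := k) (r := j) (s := l) hki.symm hij hli.symm hkj hlk.symm hlj.symm
      {i} j (by simp) (by simpa using hij.symm) ?_
    rw [wT_ee, wT_ee]; unfold vv
    simp [hki, hkj, hij, hij.symm, hli, hlj]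
  · refine key (p := p) (q := s) (r := q) (s := r) hsp.symm hqp.symm hrp.symm hsq hsr hrq.symm
      {p, q} r (by simp) (by simp [hrp, hrq]) ?_
    rw [wT_ee, wT_ee]; unfold vv
    simp [hsp, hsq, hsr, hqp, hrp, hrq, hrp.symm, hrq.symm]

end dat

section conn
variable {L : Submodule ℂ (E n)} {A : Set (Fin n → ℂ)} {ε : ℂ}
  {pf : ZMod 2} {f : E n →ₗ[ℂ] E n →ₗ[ℂ] E n}

def C1 (A : Set (Fin n → ℂ)) (f : E n →ₗ[ℂ] E n →ₗ[ℂ] E n) (c : ℂ) (x : E n) : Prop :=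
  ∀ a ∈ A, f (hh a) x = c • sbL n (hh a) x

def C2 (A : Set (Fin n → ℂ)) (f : E n →ₗ[ℂ] E n →ₗ[ℂ] E n) (c : ℂ) (x : E n) : Prop :=
  ∀ a ∈ A, f x (hh a) = c • sbL n x (hh a)

lemma link1 (d : Data L A ε) (hf : IsSuperBider n L pf f) {c : ℂ} {x y : E n} {p q η ζ}
    (hx : Good L A x p η) (hy : Good L A y q ζ) (hne : ∃ a ∈ A, ζ a ≠ η a)
    (hb : sbL n y x ≠ 0) (h : C2 A f c y) : C1 A f c x := by
  obtain ⟨l, hl⟩ := lam1 hf d.AL (h00 d hf) hx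
  obtain ⟨e1, e2⟩ := pair hf d.AL hy.toWtV hx.toWtV hl h hne hy.nz hx.nz
  have : l = c := smul_left_injective ℂ hb (e1.symm.trans e2)
  rw [← this]; exact hl

lemma link2 (d : Data L A ε) (hf : IsSuperBider n L pf f) {c : ℂ} {x y : E n} {p q η ζ}
    (hx : Good L A x p η) (hy : Good L A y q ζ) (hne : ∃ a ∈ A, ζ a ≠ η a)
    (hb : sbL n y x ≠ 0) (h : C1 A f c x) : C2 A f c y := by
  obtain ⟨l, hl⟩ := lam2 hf d.AL (h00 d hf) hy
  obtain ⟨e1, e2⟩ := pair hf d.AL hy.toWtV hx.toWtV h hl hne hy.nz hx.nz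
  have : c = l := smul_left_injective ℂ hb (e1.symm.trans e2)
  rw [this]; exact hl

lemma sb_ne_symm {x y : E n} {p q : ZMod 2} (hx : x ∈ epar n p) (hy : y ∈ epar n q)
    (h : sbL n x y ≠ 0) : sbL n y x ≠ 0 := by
  intro h0
  have h1 := sb_skew hy hx
  rw [h0, smul_zero] at h1
  apply h
  have h2 := congrArg (fun z : E n => -z) h1
  have h3 : -(0 : E n) = - - sbL n x y := h2
  rw [en_n] at h3
  rw [← h3]; exact neg_zero

lemma both1 (d : Data L A ε) (hf : IsSuperBider n L pf f) {c : ℂ} {x y : E n} {p q η ζ}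
    (hx : Good L A x p η) (hy : Good L A y q ζ) (hne : ∃ a ∈ A, ζ a ≠ η a)
    (hb : sbL n y x ≠ 0) (h : C1 A f c x ∧ C2 A f c x) : C1 A f c y ∧ C2 A f c y := by
  refine ⟨link1 d hf hy hx ?_ (sb_ne_symm hy.mem.2 hx.mem.2 hb) h.2, link2 d hf hx hy hne hb h.1⟩
  obtain ⟨a, ha, h⟩ := hne
  exact ⟨a, ha, h.symm⟩

lemma both2 (d : Data L A ε) (hf : IsSuperBider n L pf f) {c : ℂ} {x y : E n} {p q η ζ}
    (hx : Good L A x p η) (hy : Good L A y q ζ) (hne : ∃ a ∈ A, ζ a ≠ η a)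
    (hb : sbL n y x ≠ 0) (h : C1 A f c y ∧ C2 A f c y) : C1 A f c x ∧ C2 A f c x := by
  refine both1 d hf hy hx ?_ (sb_ne_symm hy.mem.2 hx.mem.2 hb) h
  obtain ⟨a, ha, h⟩ := hne
  exact ⟨a, ha, h.symm⟩

lemma Data.goodX (d : Data L A ε) {i j : Fin n} (hij : i ≠ j) :
    Good L A (XX i * pd n j) (((({i} : Finset (Fin n)).card : ℕ) : ZMod 2) + 1) (wT {i} j) :=
  d.goodT {i} j (by simp) (by simpa using hij.symm)

lemma allX (d : Data L A ε) (hf : IsSuperBider n L pf f) :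
    ∃ c : ℂ, ∀ i j, i ≠ j → C1 A f c (XX i * pd n j) ∧ C2 A f c (XX i * pd n j) := by
  have i0 : Fin n := ⟨0, by have := d.hn; omega⟩
  obtain ⟨j0, hj0, _⟩ := d.ex2 i0 i0
  obtain ⟨c, hc⟩ := lam1 hf d.AL (h00 d hf) (d.goodX hj0.symm)
  refine ⟨c, ?_⟩
  have dif : ∀ {i j k : Fin n}, i ≠ j → i ≠ k → j ≠ k → ∃ a ∈ A, wT {i} j a ≠ wT {j} k a := by
    intro i j k hij hik hjk
    exact d.differ (by simp) (by simpa using hjk.symm) (fun h => hjk h.1)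
  have dif' : ∀ {i j k : Fin n}, i ≠ j → i ≠ k → j ≠ k → ∃ a ∈ A, wT {j} k a ≠ wT {i} j a := by
    intro i j k hij hik hjk
    obtain ⟨a, ha, h⟩ := dif hij hik hjk
    exact ⟨a, ha, h.symm⟩
  have bn : ∀ {i j k : Fin n}, i ≠ j → i ≠ k → j ≠ k →
      sbL n (XX i * pd n j) (XX j * pd n k) ≠ 0 := by
    intro i j k hij hik hjk
    rw [br_Tr {i} j k (by simpa using hik.symm)]
    exact MTpd_ne _ _
  have t1 : ∀ {i j k : Fin n}, i ≠ j → i ≠ k → j ≠ k →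
      C1 A f c (XX j * pd n k) → C2 A f c (XX i * pd n j) := by
    intro i j k hij hik hjk h
    exact link2 d hf (d.goodX hjk) (d.goodX hij) (dif hij hik hjk) (bn hij hik hjk) h
  have t2 : ∀ {i j k : Fin n}, i ≠ j → i ≠ k → j ≠ k →
      C2 A f c (XX i * pd n j) → C1 A f c (XX j * pd n k) := by
    intro i j k hij hik hjk h
    exact link1 d hf (d.goodX hjk) (d.goodX hij) (dif hij hik hjk) (bn hij hik hjk) h
  have t3 : ∀ {i j k : Fin n}, i ≠ j → i ≠ k → j ≠ k →
      C2 A f c (XX j * pd n k) → C1 A f c (XX i * pd n j) := by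
    intro i j k hij hik hjk h
    exact link1 d hf (d.goodX hij) (d.goodX hjk) (dif' hij hik hjk)
      (sb_ne_symm (XXpd_epar _ _) (XXpd_epar _ _) (bn hij hik hjk)) h
  have m1 : ∀ {j k l : Fin n}, j ≠ k → j ≠ l → C1 A f c (XX j * pd n k) →
      C1 A f c (XX j * pd n l) := by
    intro j k l hjk hjl h
    obtain ⟨i, hij, hik, hil⟩ := d.ex3 j k l
    exact t2 hij hil hjl (t1 hij hik hjk h)
  have m2 : ∀ {j k i : Fin n}, i ≠ j → i ≠ k → j ≠ k → C1 A f c (XX j * pd n k) →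
      C1 A f c (XX k * pd n i) := by
    intro j k i hij hik hjk h
    exact t3 hik.symm hjk.symm hij (t1 hij hik hjk h)
  have r1 : ∀ k l, k ≠ l → C1 A f c (XX k * pd n l) := by
    intro k l hkl
    by_cases hk : k = i0
    · subst hk; exact m1 hj0.symm hkl hc
    · obtain ⟨i, hi1, hi2⟩ := d.ex2 i0 k
      have h1 : C1 A f c (XX i0 * pd n k) := m1 hj0.symm (Ne.symm hk) hc
      exact m1 hi2.symm hkl (m2 hi1 hi2 (Ne.symm hk) h1)
  intro i j hij
  obtain ⟨k, hki, hkj⟩ := d.ex2 i j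
  exact ⟨r1 i j hij, t1 hij hki.symm hkj.symm (r1 j k hkj.symm)⟩

lemma Data.D_ins (d : Data L A ε) {T : Finset (Fin n)} {i j : Fin n} (hj : j ∈ T) (hi : i ∉ T) :
    ∃ s : ℂ, s ≠ 0 ∧ ((T = {j} ∧ sbL n (Dd ε j) (MT T * pd n i) = s • Dd ε i) ∨
      ((T.erase j).Nonempty ∧
        sbL n (Dd ε j) (MT T * pd n i) = s • (MT (T.erase j) * pd n i))) := by
  have hij : i ≠ j := by rintro rfl; exact hi hj
  by_cases h : (T.erase j).Nonempty
  · refine ⟨eps j (T.erase j), eps_ne _ _, Or.inr ⟨h, ?_⟩⟩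
    have := br_D2 ε j i (T.erase j) (by simp) (by rwa [Finset.insert_erase hj]) h
    rwa [Finset.insert_erase hj] at this
  · refine ⟨1, one_ne_zero, Or.inl ?_⟩
    rw [Finset.not_nonempty_iff_eq_empty] at h
    have hT : T = {j} := by
      rw [← Finset.insert_erase hj, h]; rfl
    refine ⟨hT, ?_⟩
    rw [hT, one_smul]
    exact br_D1 ε j i hij

lemma Data.D_ins_ne (d : Data L A ε) {T : Finset (Fin n)} {i j : Fin n} (hj : j ∈ T) (hi : i ∉ T) :
    sbL n (Dd ε j) (MT T * pd n i) ≠ 0 := by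
  obtain ⟨s, hs, ⟨_, h⟩ | ⟨_, h⟩⟩ := d.D_ins hj hi
  · rw [h]; exact smul_ne_zero hs (Dd_ne ε i)
  · rw [h]; exact smul_ne_zero hs (MTpd_ne _ _)

lemma Data.difDT (d : Data L A ε) {T : Finset (Fin n)} {i : Fin n} (j : Fin n) (hT : T.Nonempty)
    (hi : i ∉ T) : ∃ a ∈ A, wT ∅ j a ≠ wT T i a :=
  d.differ hT hi (fun h => by rw [← h.2] at hT; simp at hT)

lemma allG (d : Data L A ε) (hf : IsSuperBider n L pf f) :
    ∃ c : ℂ, (∀ i, C1 A f c (Dd ε i) ∧ C2 A f c (Dd ε i)) ∧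
      ∀ T i, T.Nonempty → i ∉ T → C1 A f c (MT T * pd n i) ∧ C2 A f c (MT T * pd n i) := by
  obtain ⟨c, hc⟩ := allX d hf
  have hD : ∀ i, C1 A f c (Dd ε i) ∧ C2 A f c (Dd ε i) := by
    intro i
    obtain ⟨j, hj, _⟩ := d.ex2 i i
    refine both1 d hf (d.goodX hj.symm) (d.goodD i)
      (d.difDT i (by simp) (by simpa using hj)) ?_ (hc i j hj.symm)
    exact d.D_ins_ne (by simp) (by simpa using hj)
  refine ⟨c, hD, fun T i hT hi => ?_⟩
  obtain ⟨j, hj⟩ := id hT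
  exact both2 d hf (d.goodT T i hT hi) (d.goodD j) (d.difDT j hT hi) (d.D_ins_ne hj hi) (hD j)

inductive GB (ε : ℂ) : E n → ZMod 2 → ((Fin n → ℂ) → ℂ) → Prop
  | D (i : Fin n) : GB ε (Dd ε i) 1 (wT ∅ i)
  | T (T : Finset (Fin n)) (i : Fin n) (hT : T.Nonempty) (hi : i ∉ T) :
      GB ε (MT T * pd n i) ((T.card : ZMod 2) + 1) (wT T i)

lemma GB_good (d : Data L A ε) : ∀ x p η, GB ε x p η → Good L A x p η := by
  rintro x p η (⟨i⟩ | ⟨T, i, hT, hi⟩)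
  · exact d.goodD i
  · exact d.goodT T i hT hi

lemma GB_self (d : Data L A ε) : ∀ x p η, GB ε x p η → ∃ y q ζ, GB ε y q ζ ∧
    ∃ z r θ, GB ε z r θ ∧ (∃ a ∈ A, ζ a ≠ η a) ∧ ∃ s : ℂ, s ≠ 0 ∧ sbL n y x = s • z := by
  rintro x p η (⟨i⟩ | ⟨T, i, hT, hi⟩)
  · obtain ⟨j, hj, _⟩ := d.ex2 i i
    refine ⟨_, _, _, GB.T {i} j (by simp) (by simpa using hj), _, _, _, GB.D j, ?_, -1, by simp, ?_⟩
    · obtain ⟨a, ha, h⟩ := d.difDT (T := {i}) (i := j) i (by simp) (by simpa using hj)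
      exact ⟨a, ha, h.symm⟩
    · have h1 := br_D1 ε i j hj
      have h2 := sb_skew_even (XXpd_epar i j) (Dd ε i)
      rw [h1] at h2
      rw [en_smul, one_smul]
      exact h2
  · obtain ⟨j, hj⟩ := id hT
    obtain ⟨s, hs, ⟨_, h⟩ | ⟨h', h⟩⟩ := d.D_ins hj hi
    · exact ⟨_, _, _, GB.D j, _, _, _, GB.D i, d.difDT j hT hi, s, hs, h⟩
    · exact ⟨_, _, _, GB.D j, _, _, _, GB.T (T.erase j) i h' (fun h => hi (Finset.mem_of_mem_erase h)),
        d.difDT j hT hi, s, hs, h⟩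

lemma MTpd_sq (T : Finset (Fin n)) (i : Fin n) (hT : T.Nonempty) (hi : i ∉ T) :
    MT T * pd n i * (MT T * pd n i) = 0 := by
  obtain ⟨t, ht⟩ := hT
  rw [mul_assoc, ← mul_assoc (pd n i), pd_MT i T hi, smul_mul_assoc, mul_smul_comm, mul_assoc,
    pd_sq, mul_zero, mul_zero, smul_zero]

lemma Om_pd_Om (hn : 4 ≤ n) (i : Fin n) : MT Finset.univ * (pd n i * MT Finset.univ) = 0 := by
  have hne : ∃ k : Fin n, k ∉ ({i} : Finset (Fin n)) := exists_notMem_fin {i} (by simp; omega)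
  obtain ⟨k, hk⟩ := hne
  have hi := Finset.insert_erase (Finset.mem_univ i)
  have := pd_MT_ins i (Finset.univ.erase i) (by simp)
  rw [hi] at this
  rw [this, mul_smul_comm, mul_sub, ← mul_assoc, ← mul_assoc, Om_XX, zero_mul,
    MT_MT_meet Finset.univ (Finset.univ.erase i) k (by simp) (by simpa using hk)]
  simp

lemma Dd_sq (hn : 4 ≤ n) (i : Fin n) :
    ∃ s : ℂ, Dd ε i * Dd ε i = s • (MT (Finset.univ.erase i) * pd n i) := by
  refine ⟨- ε * eps i (Finset.univ.erase i), ?_⟩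
  have h1 : pd n i * (MT Finset.univ * pd n i) =
      eps i (Finset.univ.erase i) • (MT (Finset.univ.erase i) * pd n i) := by
    have hi := Finset.insert_erase (Finset.mem_univ i)
    have := pd_MT_ins i (Finset.univ.erase i) (by simp)
    rw [hi] at this
    rw [← mul_assoc, this, smul_mul_assoc, sub_mul, pd_MT i _ (by simp)]
    simp only [mul_smul_comm, smul_mul_assoc, mul_assoc, pd_sq, mul_zero, smul_zero, sub_zero]
  have h2 : MT Finset.univ * pd n i * (MT Finset.univ * pd n i) = 0 := by
    rw [mul_assoc, ← mul_assoc (pd n i), ← mul_assoc, Om_pd_Om hn, zero_mul]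
  have h3 : MT Finset.univ * pd n i * pd n i = 0 := by rw [mul_assoc, pd_sq, mul_zero]
  unfold Dd
  rw [sub_mul, mul_sub, mul_sub, pd_sq, mul_smul_comm, h1]
  simp only [smul_mul_assoc, mul_smul_comm]
  rw [h2, h3]
  module

lemma GB_sq (d : Data L A ε) : ∀ x p η, GB ε x p η → sbL n x x ∈ L := by
  intro x p η hx
  have hp := (GB_good d x p η hx).mem.2
  rw [sb_hom hp hp]
  suffices h : x * x ∈ L from L.sub_mem h (L.smul_mem _ h)
  obtain ⟨i⟩ | ⟨T, i, hT, hi⟩ := hx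
  · obtain ⟨s, hs⟩ := Dd_sq (ε := ε) d.hn i
    rw [hs]
    refine L.smul_mem _ (d.Tmem _ _ ?_ (by simp))
    obtain ⟨k, hk, _⟩ := d.ex2 i i
    exact ⟨k, by simpa using hk⟩
  · rw [MTpd_sq T i hT hi]; exact L.zero_mem

/-- The conclusion for `S(n)` and its deformation. -/
theorem final_base (d : Data L A ε) (hf : IsSuperBider n L pf f)
    (Gen : ∀ P : Submodule ℂ (E n), (∀ x p η, GB ε x p η → x ∈ P) →
      (∀ a b p q, a ∈ P → b ∈ P → a ∈ L ⊓ epar n p → b ∈ L ⊓ epar n q → sbL n a b ∈ L →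
        sbL n a b ∈ P) → L ≤ P) :
    ∃ c : ℂ, ∀ x ∈ L, ∀ y ∈ L, f x y = c • sbL n x y := by
  obtain ⟨c, h1, h2⟩ := allG d hf
  have hc : ∀ x p η, GB ε x p η → C1 A f c x ∧ C2 A f c x := by
    rintro x p η (⟨i⟩ | ⟨T, i, hT, hi⟩)
    · exact h1 i
    · exact h2 T i hT hi
  exact ⟨c, core_final hf d.AL (GB ε) (GB_good d) c (fun x p η h => (hc x p η h).1)
    (fun x p η h => (hc x p η h).2) (GB_self d) (GB_sq d)
    ⟨_, _, _, GB.D ⟨0, by have := d.hn; omega⟩⟩ Gen⟩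
end conn

lemma mono_sum (g : Lambda n) : g = ∑ S, g S • mono n S := by
  funext T
  rw [Finset.sum_apply]
  simp [mono]

lemma Wmap_single (i : Fin n) (g : Lambda n) :
    Wmap n (Pi.single i g) = mulOp n g * pd n i := by
  show ∑ k, mulOp n ((Pi.single i g : Fin n → Lambda n) k) * pd n k = _
  rw [Finset.sum_eq_single i]
  · simp
  · intro k _ hk
    simp [hk]
  · simp

lemma Wmap_expand (F : Fin n → Lambda n) :
    Wmap n F = ∑ k, ∑ S, F k S • (MT S * pd n k) := by
  show ∑ k, mulOp n (F k) * pd n k = _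
  refine Finset.sum_congr rfl fun k _ => ?_
  conv_lhs => rw [mono_sum (F k)]
  rw [map_sum, Finset.sum_mul]
  refine Finset.sum_congr rfl fun S _ => ?_
  rw [map_smul, smul_mul_assoc]

lemma hh_Wmap (a : Fin n → ℂ) : hh a = Wmap n (fun k => a k • mono n {k}) := by
  show _ = ∑ k, mulOp n (a k • mono n {k}) * pd n k
  unfold hh
  refine Finset.sum_congr rfl fun k _ => ?_
  rw [map_smul, smul_mul_assoc]

lemma Dd_zero (i : Fin n) : Dd 0 i = pd n i := by
  unfold Dd; rw [zero_smul, sub_zero]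

lemma MT_Wn (T : Finset (Fin n)) (i : Fin n) : MT T * pd n i ∈ Wn n :=
  ⟨_, Wmap_single i _⟩

lemma pd_Wn (i : Fin n) : pd n i ∈ Wn n := by
  have := MT_Wn ∅ i
  rwa [MT_empty, one_mul] at this

lemma dataW (hn : 4 ≤ n) : Data (Wn n) Set.univ 0 where
  hn := hn
  LW := le_rfl
  AL := fun a _ => by rw [hh_Wmap]; exact ⟨_, rfl⟩
  As := fun _ _ => trivial
  A0 := fun h => absurd rfl h
  ev := fun h => absurd rfl h
  Tmem := fun T i _ _ => MT_Wn T i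
  Dmem := fun i => by rw [Dd_zero]; exact pd_Wn i
  Done := by
    intro i u hu hw
    rw [Dd_zero]
    have := one_T (T := ∅) (i := i) hu ?_
    · rwa [MT_empty, one_mul] at this
    · intro S k h0
      have hD : k = i ∧ (S = ∅ ∨ S = Finset.univ) := by
        apply vv_D
        intro p q
        rw [← wT_ee, ← wT_ee]
        rcases mul_eq_zero.1 (wt_coef (hw (ee p q) trivial) k S) with h | h
        · unfold wT at h ⊢; linear_combination h
        · exact absurd h h0
      refine ⟨hD.1, ?_⟩
      rcases mul_eq_zero.1 (wt_coef (hw (fun _ => 1) trivial) k S) with h | h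
      · simp [wT] at h
        exact h
      · exact absurd h h0

lemma goodOm (hn : 4 ≤ n) (j : Fin n) : Good (Wn n) Set.univ (MT Finset.univ * pd n j)
    (((Finset.univ : Finset (Fin n)).card : ZMod 2) + 1) (wT Finset.univ j) where
  mem := ⟨MT_Wn _ _, MTpd_epar _ _⟩
  wt := fun a _ => wt_MT a _ _
  nz := by
    refine ⟨fun _ => 1, trivial, ?_⟩
    simp only [wT, Finset.sum_const, Finset.card_univ, Fintype.card_fin, nsmul_eq_mul, mul_one]
    rw [sub_ne_zero]
    have : n ≠ 1 := by omega
    exact_mod_cast this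
  ne := MTpd_ne _ _
  one := by
    intro u hu hw
    refine one_T hu fun S k h0 => ?_
    have hS : S = Finset.univ := by
      rcases mul_eq_zero.1 (wt_coef (hw (fun _ => 1) trivial) k S) with h | h
      · simp [wT] at h
        rw [← Finset.card_eq_iff_eq_univ, Fintype.card_fin]
        have : (S.card : ℂ) = n := by linear_combination h
        exact_mod_cast this
      · exact absurd h h0
    refine ⟨?_, hS⟩
    by_contra hkj
    rcases mul_eq_zero.1 (wt_coef (hw (ee k j) trivial) k S) with h | h
    · rw [hS] at h
      have h' : wT Finset.univ k (ee k j) - wT Finset.univ j (ee k j) = 0 := by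
        unfold wT at h ⊢; linear_combination h
      rw [wT_ee, wT_ee] at h'
      simp [vv, hkj, Ne.symm hkj] at h'
      norm_num at h'
    · exact absurd h h0

inductive GW : E n → ZMod 2 → ((Fin n → ℂ) → ℂ) → Prop
  | B {x p η} (h : GB 0 x p η) : GW x p η
  | O (j : Fin n) : GW (MT Finset.univ * pd n j)
      (((Finset.univ : Finset (Fin n)).card : ZMod 2) + 1) (wT Finset.univ j)

lemma br_Om' (j k : Fin n) : sbL n (Dd 0 j) (MT Finset.univ * pd n k) =
    eps j (Finset.univ.erase j) • (MT (Finset.univ.erase j) * pd n k) := by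
  have := br_pd j k (Finset.univ.erase j) (by simp)
  rwa [Finset.insert_erase (Finset.mem_univ j), ← Dd_zero] at this

lemma difOm (j k : Fin n) (hn : 4 ≤ n) : ∃ a ∈ (Set.univ : Set (Fin n → ℂ)),
    wT ∅ j a ≠ wT Finset.univ k a := by
  refine ⟨fun _ => 1, trivial, ?_⟩
  simp only [wT, Finset.sum_const, Finset.card_empty, Nat.cast_zero, Finset.card_univ, Fintype.card_fin,
    nsmul_eq_mul, mul_one]
  intro h
  have h' : (n : ℂ) = 0 := by linear_combination -h
  rw [Nat.cast_eq_zero] at h'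
  omega

lemma GenW (P : Submodule ℂ (E n)) (h1 : ∀ x p η, GW x p η → x ∈ P)
    (h2 : ∀ a b p q, a ∈ P → b ∈ P → a ∈ Wn n ⊓ epar n p → b ∈ Wn n ⊓ epar n q →
      sbL n a b ∈ Wn n → sbL n a b ∈ P) : Wn n ≤ P := by
  have key : ∀ (m : ℕ) (S : Finset (Fin n)) (k : Fin n), Sᶜ.card = m → MT S * pd n k ∈ P := by
    intro m
    induction m with
    | zero =>
      intro S k hS
      rw [Finset.card_eq_zero, Finset.compl_eq_empty_iff] at hS
      rw [hS]; exact h1 _ _ _ (GW.O k)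
    | succ m ih =>
      intro S k hS
      have hne : Sᶜ.Nonempty := by rw [← Finset.card_pos]; omega
      obtain ⟨j, hj⟩ := hne
      have hjS : j ∉ S := by simpa using hj
      have hi := ih (insert j S) k (by
        rw [Finset.compl_insert, Finset.card_erase_of_mem hj]; omega)
      have hb := br_pd j k S hjS
      have hp : pd n j ∈ P := by
        have := h1 _ _ _ (GW.B (GB.D j))
        rwa [Dd_zero] at this
      have := h2 _ _ _ _ hp hi ⟨pd_Wn j, pd_epar j⟩ ⟨MT_Wn _ _, MTpd_epar _ _⟩
        (by rw [hb]; exact (Wn n).smul_mem _ (MT_Wn _ _))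
      rw [hb] at this
      have h3 := P.smul_mem (eps j S) this
      rwa [smul_smul, eps_sq, one_smul] at h3
  rintro _ ⟨F, rfl⟩
  rw [Wmap_expand]
  exact P.sum_mem fun k _ => P.sum_mem fun S _ => P.smul_mem _ (key _ S k rfl)

theorem final_W (hn : 4 ≤ n) {pf : ZMod 2} {f : E n →ₗ[ℂ] E n →ₗ[ℂ] E n}
    (hf : IsSuperBider n (Wn n) pf f) :
    ∃ c : ℂ, ∀ x ∈ Wn n, ∀ y ∈ Wn n, f x y = c • sbL n x y := by
  have d := dataW hn
  obtain ⟨c, h1, h2⟩ := allG d hf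
  have hg : ∀ x p η, GW x p η → Good (Wn n) Set.univ x p η := by
    rintro x p η (h | ⟨j⟩)
    · exact GB_good d _ _ _ h
    · exact goodOm hn j
  have hc : ∀ x p η, GW x p η → C1 Set.univ f c x ∧ C2 Set.univ f c x := by
    rintro x p η (h | ⟨j⟩)
    · obtain ⟨i⟩ | ⟨T, i, hT, hi⟩ := h
      · exact h1 i
      · exact h2 T i hT hi
    · refine both2 d hf (goodOm hn j) (d.goodD j) (difOm j j hn) ?_ (h1 j)
      rw [br_Om']
      exact smul_ne_zero (eps_ne _ _) (MTpd_ne _ _)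
  refine ⟨c, core_final hf d.AL GW hg c (fun x p η h => (hc x p η h).1)
    (fun x p η h => (hc x p η h).2) ?_ ?_ ⟨_, _, _, GW.B (GB.D ⟨0, by omega⟩)⟩ GenW⟩
  · rintro x p η (h | ⟨j⟩)
    · obtain ⟨y, q, ζ, hy, z, r, θ, hz, hh⟩ := GB_self d _ _ _ h
      exact ⟨y, q, ζ, GW.B hy, z, r, θ, GW.B hz, hh⟩
    · refine ⟨_, _, _, GW.B (GB.D j), _, _, _,
        GW.B (GB.T (Finset.univ.erase j) j ?_ (by simp)), difOm j j hn, _, eps_ne _ _, br_Om' j j⟩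
      obtain ⟨k, hk, _⟩ := d.ex2 j j
      exact ⟨k, by simpa using hk⟩
  · rintro x p η (h | ⟨j⟩)
    · exact GB_sq d _ _ _ h
    · have hp := MTpd_epar (Finset.univ : Finset (Fin n)) j
      rw [sb_hom hp hp]
      have h2 : MT Finset.univ * pd n j * (MT Finset.univ * pd n j) = 0 := by
        rw [mul_assoc, ← mul_assoc (pd n j), ← mul_assoc, Om_pd_Om hn, zero_mul]
      rw [h2, smul_zero, sub_zero]; exact Submodule.zero_mem _

/-- The coefficient tuples `g_k ↦ g_k - ε g_k(∅) ω`. -/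
def sc (ε : ℂ) (G : Fin n → Lambda n) : Fin n → Lambda n :=
  fun k => G k - (ε * G k ∅) • mono n Finset.univ

lemma univ_ne_empty (hn : 4 ≤ n) : (Finset.univ : Finset (Fin n)) ≠ ∅ := by
  intro h
  have := Finset.mem_univ (⟨0, by omega⟩ : Fin n)
  rw [h] at this; simp at this

lemma mono_apply (S T : Finset (Fin n)) : mono n S T = if T = S then 1 else 0 := rfl

lemma sc_eq {ε : ℂ} {G : Fin n → Lambda n} (h : ∀ k, G k ∅ = 0) : sc ε G = G := by
  funext k
  unfold sc
  rw [h k, mul_zero, zero_smul, sub_zero]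

lemma sc_single_empty (ε : ℂ) (i : Fin n) :
    Wmap n (sc ε (Pi.single i (mono n ∅))) = Dd ε i := by
  have h : sc ε (Pi.single i (mono n ∅)) =
      (Pi.single i (mono n ∅ - ε • mono n Finset.univ) : Fin n → Lambda n) := by
    funext k
    unfold sc
    by_cases hk : k = i
    · subst hk; simp [mono_apply]
    · simp [hk]
  rw [h, Wmap_single, map_sub, map_smul, sub_mul, smul_mul_assoc]
  unfold Dd
  have : mulOp n (mono n ∅) = (1 : E n) := MT_empty
  rw [this, one_mul]

lemma div_apply (G : Fin n → Lambda n) (S : Finset (Fin n)) :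
    divMap n G S = ∑ k, if k ∈ S then 0 else eps k S * G k (insert k S) := by
  show (∑ k, pd n k (G k)) S = _
  rw [Finset.sum_apply]
  rfl

lemma div_single (i : Fin n) (g : Lambda n) : divMap n (Pi.single i g) = pd n i g := by
  show ∑ k, pd n k ((Pi.single i g : Fin n → Lambda n) k) = _
  rw [Finset.sum_eq_single i]
  · simp
  · intro k _ hk
    simp [hk]
  · simp

lemma pd_mono_notMem (i : Fin n) (T : Finset (Fin n)) (hi : i ∉ T) : pd n i (mono n T) = 0 := by
  funext S
  rw [pd_apply]
  split_ifs with h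
  · rfl
  · rw [mono_apply, if_neg]
    · simp
    · rintro rfl; simp at hi

lemma ee_zero (i j : Fin n) : ∑ k, ee i j k = 0 := by
  unfold ee
  simp [Finset.sum_sub_distrib]

lemma div_diag (a : Fin n → ℂ) (ha : ∑ i, a i = 0) :
    divMap n (fun k => a k • mono n {k}) = 0 := by
  show ∑ k, pd n k (a k • mono n {k}) = 0
  have : ∀ k, pd n k (a k • mono n {k}) = a k • mono n ∅ := by
    intro k; rw [map_smul, pd_mono_single, if_pos rfl]
  rw [Finset.sum_congr rfl fun k _ => this k, ← Finset.sum_smul, ha, zero_smul]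

section stype
variable {L : Submodule ℂ (E n)} {ε : ℂ}

lemma dataS (hn : 4 ≤ n) (hev : ε ≠ 0 → Even n)
    (hL : ∀ u, u ∈ L ↔ ∃ G, divMap n G = 0 ∧ Wmap n (sc ε G) = u) :
    Data L {a | ∑ i, a i = 0} ε where
  hn := hn
  LW := by
    intro u hu
    obtain ⟨G, _, rfl⟩ := (hL u).1 hu
    exact ⟨_, rfl⟩
  AL := by
    intro a ha
    refine (hL _).2 ⟨_, div_diag a ha, ?_⟩
    rw [sc_eq, hh_Wmap]
    intro k
    have : (∅ : Finset (Fin n)) ≠ {k} := (Finset.singleton_ne_empty k).symm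
    simp [mono_apply, this]
  As := ee_zero
  A0 := fun _ _ h => h
  ev := hev
  Tmem := by
    intro T i hT hi
    refine (hL _).2 ⟨Pi.single i (mono n T), ?_, ?_⟩
    · rw [div_single, pd_mono_notMem i T hi]
    · rw [sc_eq, Wmap_single]
      intro k
      by_cases hk : k = i
      · subst hk; simp [mono_apply, hT.ne_empty.symm]
      · simp [hk]
  Dmem := by
    intro i
    refine (hL _).2 ⟨Pi.single i (mono n ∅), ?_, sc_single_empty ε i⟩
    rw [div_single, pd_mono_notMem i ∅ (by simp)]
  Done := by
    intro i u hu hw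
    obtain ⟨G, hG, hGu⟩ := (hL u).1 hu
    have hW : u ∈ Wn n := ⟨_, hGu⟩
    obtain ⟨c, d, hcd⟩ := one_D (i := i) hW (by
      intro S k h0
      apply vv_D
      intro p q
      rw [← wT_ee, ← wT_ee]
      rcases mul_eq_zero.1 (wt_coef (hw (ee p q) (ee_zero p q)) k S) with h | h
      · unfold wT at h ⊢; linear_combination h
      · exact absurd h h0)
    have h1 : sc ε G i = c • mono n ∅ + d • mono n Finset.univ := by
      rw [← Wmap_mono (sc ε G) i, hGu, hcd]
      show c • pd n i (mono n {i}) + d • MT Finset.univ (pd n i (mono n {i})) = _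
      rw [pd_mono_single, if_pos rfl, mulOp_one]
    have hz := univ_ne_empty hn
    have h2 := congrFun h1 ∅
    have h3 := congrFun h1 Finset.univ
    simp [sc, mono_apply, hz, hz.symm] at h2 h3
    have h4 := congrFun hG (Finset.univ.erase i)
    rw [div_apply, Finset.sum_eq_single i] at h4
    · rw [if_neg (by simp), Finset.insert_erase (Finset.mem_univ i)] at h4
      have h5 : G i Finset.univ = 0 := (mul_eq_zero.1 h4).resolve_left (eps_ne _ _)
      have h6 : d = - (ε * c) := by rw [← h3, h2, h5]; ring
      refine ⟨c, ?_⟩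
      rw [hcd, h6]; unfold Dd; module
    · intro k _ hk
      rw [if_pos (by simpa using hk)]
    · simp

lemma br_diag (a b : Fin n) (R : Finset (Fin n)) (ha : a ∉ R) (hab : a ≠ b) :
    sbL n (XX a * MT R * pd n b) (XX b * pd n a) =
      XX a * MT R * pd n a - XX b * MT R * pd n b := by
  rw [sb_even_right (XXpd_epar b a)]
  have key : ∀ {R : Type} [Ring R] [Algebra ℂ R] (M X Y d e : R) (s : ℂ), d * X = 1 - X * d →
      e * Y = 1 - Y * e → d * M = s • (M * d) → M * Y = s • (Y * M) → X * Y = - (Y * X) →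
      e * d = - (d * e) →
      X * M * e * (Y * d) - Y * d * (X * M * e) = X * M * d - Y * M * e := by
    intro R _ _ M X Y d e s h1 h2 h3 h4 h5 h6
    have e1 : X * M * e * (Y * d) = X * M * d - X * (M * Y) * (e * d) := by
      have : X * M * e * (Y * d) = X * M * (e * Y) * d := by simp only [mul_assoc]
      rw [this, h2, mul_sub, sub_mul, mul_one]; simp only [mul_assoc]
    have e2 : Y * d * (X * M * e) = Y * M * e - Y * X * (d * M) * e := by
      have : Y * d * (X * M * e) = Y * (d * X) * M * e := by simp only [mul_assoc]
      rw [this, h1, mul_sub, sub_mul, sub_mul, mul_one]; simp only [mul_assoc]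
    have e3 : X * (M * Y) * (e * d) = Y * X * (d * M) * e := by
      rw [h4, h3, h6]
      have : X * (s • (Y * M)) * -(d * e) = s • (-(X * Y) * (M * (d * e))) := by
        simp only [mul_smul_comm, smul_mul_assoc, mul_assoc, mul_neg, neg_mul, smul_neg]
      rw [this, h5, neg_neg]
      simp only [mul_smul_comm, smul_mul_assoc, mul_assoc]
    rw [e1, e2, e3]; abel
  exact key _ _ _ _ _ _ (pd_XX_self a) (pd_XX_self b) (pd_MT a R ha) (MT_XX b R)
    (XX_anti a b) (pd_anti b a)

lemma pd_mono_insert (k : Fin n) (R : Finset (Fin n)) (hk : k ∉ R) :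
    pd n k (mono n (insert k R)) = eps k R • mono n R := by
  funext S
  rw [pd_apply, Pi.smul_apply, mono_apply, mono_apply, smul_eq_mul]
  by_cases hS : S = R
  · subst hS; simp [hk]
  · rw [if_neg hS]
    by_cases h : k ∈ S
    · simp [h]
    · have : insert k S ≠ insert k R := by
        intro h'
        apply hS
        rw [← Finset.erase_insert h, h', Finset.erase_insert hk]
      simp [h, this]

lemma Ndiff_mem (hL : ∀ u, u ∈ L ↔ ∃ G, divMap n G = 0 ∧ Wmap n (sc ε G) = u)
    (a b : Fin n) (R : Finset (Fin n)) (ha : a ∉ R) (hb : b ∉ R) :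
    XX a * MT R * pd n a - XX b * MT R * pd n b ∈ L := by
  refine (hL _).2 ⟨Pi.single a (eps a R • mono n (insert a R)) -
    Pi.single b (eps b R • mono n (insert b R)), ?_, ?_⟩
  · rw [map_sub, div_single, div_single, map_smul, map_smul, pd_mono_insert a R ha,
      pd_mono_insert b R hb, smul_smul, smul_smul, eps_sq, eps_sq, sub_self]
  · rw [sc_eq]
    · rw [map_sub, Wmap_single, Wmap_single, map_smul, map_smul, XX_MT a R ha, XX_MT b R hb]
    · have h0 : ∀ c k : Fin n, (Pi.single c (eps c R • mono n (insert c R)) : Fin n → Lambda n) k ∅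
          = 0 := by
        intro c k
        by_cases hk : k = c
        · subst hk
          have : (∅ : Finset (Fin n)) ≠ insert k R := (Finset.insert_ne_empty k R).symm
          simp [mono_apply, this]
        · simp [hk]
      intro k
      rw [Pi.sub_apply, Pi.sub_apply, h0, h0, sub_zero]

lemma sum_shift {M : Type} [AddCommMonoid M] (k : Fin n) (g : Finset (Fin n) → M) :
    ∑ S, g S = ∑ S, (if k ∈ S then 0 else g S) + ∑ R, (if k ∈ R then 0 else g (insert k R)) := by
  have h1 : ∑ R, (if k ∈ R then 0 else g (insert k R)) = ∑ S, (if k ∈ S then g S else 0) := by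
    have h0 : ∀ R, (if k ∈ R then 0 else g (insert k R)) =
        if k ∉ R then g (insert k R) else 0 := by
      intro R; rw [ite_not]
    simp only [h0]
    rw [← Finset.sum_filter, ← Finset.sum_filter]
    refine Finset.sum_bij' (fun R _ => insert k R) (fun S _ => S.erase k) ?_ ?_ ?_ ?_ ?_
    · intro R hR; simp
    · intro S hS; simp
    · intro R hR
      exact Finset.erase_insert (by simpa using hR)
    · intro S hS
      exact Finset.insert_erase (by simpa using hS)
    · intro R hR; rfl
  rw [h1, ← Finset.sum_add_distrib]
  refine Finset.sum_congr rfl fun S _ => ?_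
  split_ifs <;> simp

def QQ (ε : ℂ) (k : Fin n) (S : Finset (Fin n)) : E n :=
  MT S * pd n k - (if S = ∅ then ε else 0) • (MT Finset.univ * pd n k)

lemma QQ_empty (k : Fin n) : QQ ε k ∅ = Dd ε k := by
  unfold QQ Dd
  rw [if_pos rfl, MT_empty, one_mul]

lemma QQ_ne (k : Fin n) {S : Finset (Fin n)} (h : S ≠ ∅) : QQ ε k S = MT S * pd n k := by
  unfold QQ
  rw [if_neg h, zero_smul, sub_zero]

lemma Wsc_expand (G : Fin n → Lambda n) :
    Wmap n (sc ε G) = ∑ k, ∑ S, G k S • QQ ε k S := by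
  show ∑ k, mulOp n (sc ε G k) * pd n k = _
  refine Finset.sum_congr rfl fun k _ => ?_
  have h1 : mulOp n (G k) * pd n k = ∑ S, G k S • (MT S * pd n k) := by
    conv_lhs => rw [mono_sum (G k)]
    rw [map_sum, Finset.sum_mul]
    refine Finset.sum_congr rfl fun S _ => ?_
    rw [map_smul, smul_mul_assoc]
  have h2 : (ε * G k ∅) • (MT Finset.univ * pd n k) =
      ∑ S, (G k S * (if S = ∅ then ε else 0)) • (MT Finset.univ * pd n k) := by
    rw [← Finset.sum_smul]
    congr 1
    simp [mul_comm]
  unfold sc QQ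
  rw [map_sub, map_smul, sub_mul, smul_mul_assoc, h1, h2, ← Finset.sum_sub_distrib]
  refine Finset.sum_congr rfl fun S _ => ?_
  module

lemma GenS (hL : ∀ u, u ∈ L ↔ ∃ G, divMap n G = 0 ∧ Wmap n (sc ε G) = u)
    (d : Data L {a | ∑ i, a i = 0} ε)
    (P : Submodule ℂ (E n)) (h1 : ∀ x p η, GB ε x p η → x ∈ P)
    (h2 : ∀ a b p q, a ∈ P → b ∈ P → a ∈ L ⊓ epar n p → b ∈ L ⊓ epar n q →
      sbL n a b ∈ L → sbL n a b ∈ P) : L ≤ P := by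
  have hN : ∀ (a b : Fin n) (R : Finset (Fin n)), a ∉ R → b ∉ R →
      XX a * MT R * pd n a - XX b * MT R * pd n b ∈ P := by
    intro a b R ha hb
    by_cases hab : a = b
    · subst hab; rw [sub_self]; exact P.zero_mem
    have hbi : b ∉ insert a R := by simp [Ne.symm hab, hb]
    have hne : (insert a R).Nonempty := ⟨a, by simp⟩
    have hG1 := GB.T (ε := ε) (insert a R) b hne hbi
    have hG2 := GB.T (ε := ε) {b} a (by simp) (by simpa using hab)
    have hbr := br_diag a b R ha hab
    have hx : XX a * MT R * pd n b = eps a R • (MT (insert a R) * pd n b) := by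
      rw [XX_MT a R ha, smul_mul_assoc]
    have m := (GB_good d _ _ _ hG1).mem
    rw [← hbr]
    rw [hx]
    refine h2 _ _ _ _ (P.smul_mem _ (h1 _ _ _ hG1)) (h1 _ _ _ hG2)
      (Submodule.smul_mem _ _ m) (GB_good d _ _ _ hG2).mem ?_
    rw [← hx, hbr]
    exact Ndiff_mem hL a b R ha hb
  intro u hu
  obtain ⟨G, hG, rfl⟩ := (hL u).1 hu
  rw [Wsc_expand, Finset.sum_congr rfl fun k _ => sum_shift k (fun S => G k S • QQ ε k S),
    Finset.sum_add_distrib]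
  refine P.add_mem ?_ ?_
  · refine P.sum_mem fun k _ => P.sum_mem fun S _ => ?_
    split_ifs with hk
    · exact P.zero_mem
    · refine P.smul_mem _ ?_
      by_cases hS : S = ∅
      · rw [hS, QQ_empty]; exact h1 _ _ _ (GB.D k)
      · rw [QQ_ne k hS]
        exact h1 _ _ _ (GB.T S k (Finset.nonempty_iff_ne_empty.2 hS) hk)
  · rw [Finset.sum_comm]
    refine P.sum_mem fun R _ => ?_
    have hdiv : ∑ k, (if k ∈ R then 0 else eps k R * G k (insert k R)) = 0 := by
      rw [← div_apply, hG]; rfl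
    have hterm : ∀ k, (if k ∈ R then 0 else G k (insert k R) • QQ ε k (insert k R)) =
        (if k ∈ R then 0 else eps k R * G k (insert k R)) • (XX k * MT R * pd n k) := by
      intro k
      by_cases hk : k ∈ R
      · rw [if_pos hk, if_pos hk, zero_smul]
      · rw [if_neg hk, if_neg hk, QQ_ne k (Finset.insert_ne_empty k R), MT_insert k R hk,
          smul_mul_assoc, smul_smul, mul_comm]
    rw [Finset.sum_congr rfl fun k _ => hterm k]
    by_cases hR : ∃ b, b ∉ R
    · obtain ⟨b, hb⟩ := hR
      have e : ∑ k, (if k ∈ R then 0 else eps k R * G k (insert k R)) • (XX k * MT R * pd n k) =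
          ∑ k, (if k ∈ R then 0 else eps k R * G k (insert k R)) •
            (XX k * MT R * pd n k - XX b * MT R * pd n b) := by
        have : ∑ k, (if k ∈ R then 0 else eps k R * G k (insert k R)) •
            (XX b * MT R * pd n b) = 0 := by
          rw [← Finset.sum_smul, hdiv, zero_smul]
        rw [Finset.sum_congr rfl fun k _ => smul_sub _ _ _, Finset.sum_sub_distrib, this, sub_zero]
      rw [e]
      refine P.sum_mem fun k _ => ?_
      by_cases hk : k ∈ R
      · rw [if_pos hk, zero_smul]; exact P.zero_mem
      · exact P.smul_mem _ (hN k b R hk hb)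
    · push Not at hR
      refine P.sum_mem fun k _ => ?_
      rw [if_pos (hR k), zero_smul]; exact P.zero_mem

theorem final_S (hn : 4 ≤ n) (hev : ε ≠ 0 → Even n)
    (hL : ∀ u, u ∈ L ↔ ∃ G, divMap n G = 0 ∧ Wmap n (sc ε G) = u)
    {pf : ZMod 2} {f : E n →ₗ[ℂ] E n →ₗ[ℂ] E n} (hf : IsSuperBider n L pf f) :
    ∃ c : ℂ, ∀ x ∈ L, ∀ y ∈ L, f x y = c • sbL n x y :=
  final_base (dataS hn hev hL) hf (GenS hL (dataS hn hev hL))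
end stype

lemma Sn_iff (u : E n) : u ∈ Sn n ↔ ∃ G, divMap n G = 0 ∧ Wmap n (sc 0 G) = u := by
  have : ∀ G : Fin n → Lambda n, sc 0 G = G := by
    intro G; funext k; unfold sc; rw [zero_mul, zero_smul, sub_zero]
  simp only [this]
  exact Iff.rfl

lemma Om_apply (g : Lambda n) : MT Finset.univ g = g ∅ • mono n Finset.univ := by
  funext U
  rw [MT_apply, Pi.smul_apply, mono_apply]
  by_cases h : U = Finset.univ
  · subst h; simp [inversions, msign]
  · have : ¬ Finset.univ ⊆ U := fun h' => h (Finset.univ_subset_iff.1 h')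
    rw [if_neg this, if_neg h, smul_zero]

lemma Stn_iff (u : E n) : u ∈ Stn n ↔ ∃ G, divMap n G = 0 ∧ Wmap n (sc 1 G) = u := by
  have : ∀ G : Fin n → Lambda n, sc 1 G = oneMScale n G := by
    intro G; funext k
    show _ = mulOp n (oneM n) (G k)
    unfold oneM omegaTop
    rw [map_sub]
    show _ = MT ∅ (G k) - MT Finset.univ (G k)
    rw [MT_empty, Om_apply]
    unfold sc
    rw [one_mul]; rfl
  simp only [this]
  exact Iff.rfl

end helpers

/-- Every (homogeneous) super-biderivation of the Cartan type Lie
superalgebra `W(n)`, `S(n)`, or `S̃(n)` (`n` even), `n ≥ 4`, over `ℂ` is an inner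
super-biderivation: `BDer(L) = IBDer(L)`. -/
theorem superBider_inner_WSSt (n : ℕ) (hn : 4 ≤ n) (t : CT)
    (ht : t = CT.W ∨ t = CT.S ∨ (t = CT.St ∧ Even n))
    (pf : ZMod 2) (f : E n →ₗ[ℂ] E n →ₗ[ℂ] E n)
    (hf : IsSuperBider n (t.algebra n) pf f) :
    ∃ lam : ℂ, ∀ x ∈ t.algebra n, ∀ y ∈ t.algebra n, f x y = lam • sbL n x y := by
  rcases ht with rfl | rfl | ⟨rfl, hev⟩
  · exact final_W hn hf
  · exact final_S hn (fun h => absurd rfl h) Sn_iff hf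
  · exact final_S hn (fun _ => hev) Stn_iff hf

end CartanSuper
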